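/- arXiv:1704.05377 — 4 statements merged into one kernel-verified Lean document; each statement's English description precedes it below -/
import Mathlib

section
/- Suppose M₀ ≠ ∅. Then Problem 2 is solvable if and only if ψ_n = 0 for every n ∈ M₀. In that case the set of solutions consists exactly of those f ∈ C¹([0,π]) with f(0) = f(π) = 0 whose sine coefficients satisfy f_n = ψ_n/Λ_n for all n ∉ M₀, while f_n for n ∈ M₀ are arbitrary. -/
open Real Set

noncomputable section

/-- Mean value of a function over the period `[0, 2π]`. -/
def pmean (g : ℝ → ℝ) : ℝ := (2 * π)⁻¹ * ∫ τ in (0:ℝ)..(2 * π), g τ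

/-- `u` is a classical solution of `∂u/∂t = ∂²u/∂x² + F(x,t)` in `Π = (0,π)×(0,T)`
vanishing on the parabolic boundary `Γ`. -/
def IsClassicalSolution (T : ℝ) (F : ℝ → ℝ → ℝ) (u : ℝ → ℝ → ℝ) : Prop :=
  ContinuousOn (fun p : ℝ × ℝ => u p.1 p.2) (Icc 0 π ×ˢ Icc 0 T) ∧
  (∀ x ∈ Icc (0:ℝ) π, u x 0 = 0) ∧
  (∀ t ∈ Icc (0:ℝ) T, u 0 t = 0 ∧ u π t = 0) ∧
  ∃ ut ux uxx : ℝ → ℝ → ℝ,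
    ContinuousOn (fun p : ℝ × ℝ => ut p.1 p.2) (Ioo 0 π ×ˢ Ioo 0 T) ∧
    ContinuousOn (fun p : ℝ × ℝ => uxx p.1 p.2) (Ioo 0 π ×ˢ Ioo 0 T) ∧
    ∀ x ∈ Ioo (0:ℝ) π, ∀ t ∈ Ioo (0:ℝ) T,
      HasDerivAt (fun t' => u x t') (ut x t) t ∧
      HasDerivAt (fun x' => u x' t) (ux x t) x ∧
      HasDerivAt (fun x' => ux x' t) (uxx x t) x ∧
      ut x t = uxx x t + F x t

/-- `f` is of class `C¹` on `[0,π]`. -/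
def IsC1 (f : ℝ → ℝ) : Prop :=
  ∃ f' : ℝ → ℝ, ContinuousOn f' (Icc 0 π) ∧
    ∀ x ∈ Icc (0:ℝ) π, HasDerivWithinAt f (f' x) (Icc 0 π) x

/-- `f` solves Problem 2: `f ∈ C¹([0,π])`, `f(0) = f(π) = 0`, and for any family of
classical solutions `u_ω` of the problem with source `f(x) r(t,ωt)` one has
`‖u_ω(·,t₀) − ψ‖_{C([0,π])} → 0` as `ω → ∞`. -/
def SolvesProblem2 (T t₀ : ℝ) (r0 : ℝ → ℝ) (r1 : ℝ → ℝ → ℝ) (ψ : ℝ → ℝ)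
    (f : ℝ → ℝ) : Prop :=
  IsC1 f ∧ f 0 = 0 ∧ f π = 0 ∧
  ∀ u : ℝ → ℝ → ℝ → ℝ,
    (∀ ω : ℝ, 1 ≤ ω →
      IsClassicalSolution T (fun x t => f x * (r0 t + r1 t (ω * t))) (u ω)) →
    ∀ ε > 0, ∃ ω₀ ≥ (1:ℝ), ∀ ω ≥ ω₀, ∀ x ∈ Icc (0:ℝ) π, |u ω x t₀ - ψ x| ≤ ε


lemma aux_max_principle (T : ℝ) (w : ℝ → ℝ → ℝ)
    (hc : ContinuousOn (fun p : ℝ × ℝ => w p.1 p.2) (Icc 0 π ×ˢ Icc 0 T))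
    (h0 : ∀ x ∈ Icc (0:ℝ) π, w x 0 = 0)
    (hb : ∀ t ∈ Icc (0:ℝ) T, w 0 t = 0 ∧ w π t = 0)
    (wt wx wxx : ℝ → ℝ → ℝ)
    (hd : ∀ x ∈ Ioo (0:ℝ) π, ∀ t ∈ Ioo (0:ℝ) T,
      HasDerivAt (fun t' => w x t') (wt x t) t ∧
      HasDerivAt (fun x' => w x' t) (wx x t) x ∧
      HasDerivAt (fun x' => wx x' t) (wxx x t) x ∧
      wt x t = wxx x t) :
    ∀ x ∈ Icc (0:ℝ) π, ∀ t ∈ Ico (0:ℝ) T, w x t ≤ 0 := by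
  intro x1 hx1 t1 ht1
  by_contra hcon
  push Not at hcon
  have hT : 0 < T := lt_of_le_of_lt ht1.1 ht1.2
  set ε := w x1 t1 / (2 * T) with hε
  have hεpos : 0 < ε := by positivity
  have hK : IsCompact (Icc (0:ℝ) π ×ˢ Icc (0:ℝ) t1) := isCompact_Icc.prod isCompact_Icc
  have hcv : ContinuousOn (fun p : ℝ × ℝ => w p.1 p.2 - ε * p.2) (Icc 0 π ×ˢ Icc 0 t1) := by
    apply ContinuousOn.sub
    · exact hc.mono (prod_mono le_rfl (Icc_subset_Icc_right ht1.2.le))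
    · fun_prop
  obtain ⟨⟨xs, ts⟩, hmem, hmax⟩ := hK.exists_isMaxOn ⟨(x1, t1), hx1, ht1.1, le_rfl⟩ hcv
  have hmax' : ∀ x ∈ Icc (0:ℝ) π, ∀ t ∈ Icc (0:ℝ) t1, w x t - ε * t ≤ w xs ts - ε * ts := by
    intro x hx t ht
    exact hmax (show (x, t) ∈ Icc (0:ℝ) π ×ˢ Icc (0:ℝ) t1 from ⟨hx, ht⟩)
  obtain ⟨hxs, hts⟩ := hmem
  simp only at hxs hts
  have hpos : 0 < w xs ts - ε * ts := by
    have h1 := hmax' x1 hx1 t1 ⟨ht1.1, le_rfl⟩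
    have h2 : ε * t1 ≤ ε * T := by gcongr; exact ht1.2.le
    have h3 : ε * T = w x1 t1 / 2 := by rw [hε]; field_simp
    linarith
  have hεts : 0 ≤ ε * ts := mul_nonneg hεpos.le hts.1
  have hwpos : 0 < w xs ts := by linarith
  have htsT : ts < T := lt_of_le_of_lt hts.2 ht1.2
  have hts0 : 0 < ts := by
    rcases hts.1.eq_or_lt with h | h
    · rw [← h, h0 xs hxs] at hwpos; exact absurd hwpos (lt_irrefl _)
    · exact h
  have hxs0 : 0 < xs := by
    rcases hxs.1.eq_or_lt with h | h
    · rw [← h, (hb ts ⟨hts.1, htsT.le⟩).1] at hwpos; exact absurd hwpos (lt_irrefl _)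
    · exact h
  have hxsπ : xs < π := by
    rcases hxs.2.eq_or_lt with h | h
    · rw [h, (hb ts ⟨hts.1, htsT.le⟩).2] at hwpos; exact absurd hwpos (lt_irrefl _)
    · exact h
  obtain ⟨hdt, hdx, hdxx, heq⟩ := hd xs ⟨hxs0, hxsπ⟩ ts ⟨hts0, htsT⟩
  have hge : ε ≤ wt xs ts := by
    have h1 : Filter.Tendsto (slope (fun t' => w xs t') ts) (nhdsWithin ts (Iio ts))
        (nhds (wt xs ts)) := by
      have := (hasDerivWithinAt_iff_tendsto_slope' (s := Iio ts) (by simp)).1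
        (hdt.hasDerivWithinAt (s := Iio ts))
      exact this
    refine ge_of_tendsto h1 ?_
    have : Ioo 0 ts ∈ nhdsWithin ts (Iio ts) := Ioo_mem_nhdsLT hts0
    filter_upwards [this] with s hs
    rw [slope_def_field, le_div_iff_of_neg (by linarith [hs.2])]
    have := hmax' xs hxs s ⟨hs.1.le, hs.2.le.trans hts.2⟩
    linarith
  have hwx0 : wx xs ts = 0 := by
    have : IsLocalMax (fun x' => w x' ts) xs := by
      filter_upwards [Icc_mem_nhds hxs0 hxsπ] with y hy
      have := hmax' y hy ts hts
      linarith
    exact this.hasDerivAt_eq_zero hdx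
  have hwxxpos : 0 < wxx xs ts := by rw [← heq]; linarith
  have hright : ∀ᶠ y in nhdsWithin xs (Ioi xs), 0 < wx y ts := by
    have h1 : Filter.Tendsto (slope (fun x' => wx x' ts) xs) (nhdsWithin xs (Ioi xs))
        (nhds (wxx xs ts)) := by
      have := (hasDerivWithinAt_iff_tendsto_slope' (s := Ioi xs) (by simp)).1
        (hdxx.hasDerivWithinAt (s := Ioi xs))
      exact this
    filter_upwards [h1.eventually (lt_mem_nhds hwxxpos), self_mem_nhdsWithin] with y hy hy2
    rw [slope_def_field, hwx0, sub_zero] at hy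
    have : 0 < y - xs := sub_pos.2 hy2
    exact (div_pos_iff_of_pos_right this).1 hy
  obtain ⟨z, hz, hzs⟩ := mem_nhdsGT_iff_exists_Ioo_subset.1 hright
  set y := min ((xs + z)/2) ((xs + π)/2) with hy
  have hz' : xs < z := hz
  have hy1 : xs < y := lt_min (by linarith) (by linarith)
  have hy2 : y < z := lt_of_le_of_lt (min_le_left _ _) (by linarith)
  have hy3 : y < π := lt_of_le_of_lt (min_le_right _ _) (by linarith)
  obtain ⟨c, hc1, hc2⟩ := exists_hasDerivAt_eq_slope (fun x' => w x' ts) (fun x' => wx x' ts) hy1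
    (fun c hc => ((hd c ⟨by linarith [hc.1], by linarith [hc.2]⟩ ts ⟨hts0, htsT⟩).2.1).continuousAt.continuousWithinAt)
    (fun c hc => (hd c ⟨by linarith [hc.1], by linarith [hc.2]⟩ ts ⟨hts0, htsT⟩).2.1)
  have h5 : 0 < wx c ts := hzs ⟨hc1.1, hc1.2.trans hy2⟩
  have h6 : w y ts ≤ w xs ts := by
    have := hmax' y ⟨by linarith, hy3.le⟩ ts hts
    linarith
  rw [hc2] at h5
  have := (div_pos_iff_of_pos_right (sub_pos.2 hy1)).1 h5
  linarith

lemma aux_max_principle' (T : ℝ) (hT : 0 < T) (w : ℝ → ℝ → ℝ)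
    (hc : ContinuousOn (fun p : ℝ × ℝ => w p.1 p.2) (Icc 0 π ×ˢ Icc 0 T))
    (h0 : ∀ x ∈ Icc (0:ℝ) π, w x 0 = 0)
    (hb : ∀ t ∈ Icc (0:ℝ) T, w 0 t = 0 ∧ w π t = 0)
    (wt wx wxx : ℝ → ℝ → ℝ)
    (hd : ∀ x ∈ Ioo (0:ℝ) π, ∀ t ∈ Ioo (0:ℝ) T,
      HasDerivAt (fun t' => w x t') (wt x t) t ∧
      HasDerivAt (fun x' => w x' t) (wx x t) x ∧
      HasDerivAt (fun x' => wx x' t) (wxx x t) x ∧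
      wt x t = wxx x t) :
    ∀ x ∈ Icc (0:ℝ) π, ∀ t ∈ Icc (0:ℝ) T, w x t ≤ 0 := by
  intro x hx t ht
  have h := aux_max_principle T w hc h0 hb wt wx wxx hd x hx
  have hcont : ContinuousOn (fun t => w x t) (Icc 0 T) :=
    hc.comp (f := fun t => (x, t)) (by fun_prop) (fun t ht => ⟨hx, ht⟩)
  rcases ht.2.eq_or_lt with h1 | h1
  · subst h1
    have h2 : Filter.Tendsto (fun s => w x s) (nhdsWithin t (Ico 0 t)) (nhds (w x t)) :=
      (hcont t ht).mono Ico_subset_Icc_self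
    have : (nhdsWithin t (Ico 0 t)).NeBot := by
      rw [← mem_closure_iff_nhdsWithin_neBot, closure_Ico hT.ne]
      exact ht
    exact le_of_tendsto h2 (by filter_upwards [self_mem_nhdsWithin] with s hs using h s hs)
  · exact h t ⟨ht.1, h1⟩

lemma aux_unique (T : ℝ) (hT : 0 < T) (F : ℝ → ℝ → ℝ) (u v : ℝ → ℝ → ℝ)
    (hu : IsClassicalSolution T F u) (hv : IsClassicalSolution T F v) :
    ∀ x ∈ Icc (0:ℝ) π, ∀ t ∈ Icc (0:ℝ) T, u x t = v x t := by
  have key : ∀ u v : ℝ → ℝ → ℝ, IsClassicalSolution T F u → IsClassicalSolution T F v →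
    ∀ x ∈ Icc (0:ℝ) π, ∀ t ∈ Icc (0:ℝ) T, u x t - v x t ≤ 0 := by
    rintro u v ⟨u1, u2, u3, ut, ux, uxx, -, -, u4⟩ ⟨v1, v2, v3, vt, vx, vxx, -, -, v4⟩
    refine aux_max_principle' T hT (fun x t => u x t - v x t) (u1.sub v1) ?_ ?_
      (fun x t => ut x t - vt x t) (fun x t => ux x t - vx x t) (fun x t => uxx x t - vxx x t) ?_
    · intro x hx
      simp [u2 x hx, v2 x hx]
    · intro t ht
      simp [u3 t ht, v3 t ht]
    · intro x hx t ht
      obtain ⟨a1, a2, a3, a4⟩ := u4 x hx t ht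
      obtain ⟨b1, b2, b3, b4⟩ := v4 x hx t ht
      exact ⟨a1.sub b1, a2.sub b2, a3.sub b3, by simp only [a4, b4]; ring⟩
  intro x hx t ht
  have h1 := key u v hu hv x hx t ht
  have h2 := key v u hv hu x hx t ht
  linarith

lemma aux_int_cos (k : ℤ) (hk : k ≠ 0) : ∫ x in (0:ℝ)..π, cos ((k:ℝ) * x) = 0 := by
  have hk' : (k:ℝ) ≠ 0 := by exact_mod_cast hk
  rw [intervalIntegral.integral_comp_mul_left _ hk']
  simp [sin_int_mul_pi]

lemma aux_orth_sin (m n : ℕ) :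
    ∫ x in (0:ℝ)..π, sin (((m:ℝ) + 1) * x) * sin (((n:ℝ) + 1) * x)
      = if m = n then π / 2 else 0 := by
  have h1 : ∀ x : ℝ, sin (((m:ℝ) + 1) * x) * sin (((n:ℝ) + 1) * x) =
      (1/2) * (cos ((((m:ℤ) - n : ℤ) : ℝ) * x) - cos ((((m:ℤ) + n + 2 : ℤ) : ℝ) * x)) := by
    intro x
    push_cast
    rw [show ((m:ℝ) - n) * x = ((m:ℝ) + 1) * x - ((n:ℝ) + 1) * x by ring,
      show ((m:ℝ) + n + 2) * x = ((m:ℝ) + 1) * x + ((n:ℝ) + 1) * x by ring, cos_sub, cos_add]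
    ring
  simp_rw [h1]
  rw [intervalIntegral.integral_const_mul, intervalIntegral.integral_sub
    (Continuous.intervalIntegrable (by fun_prop) _ _)
    (Continuous.intervalIntegrable (by fun_prop) _ _), aux_int_cos _ (by omega : (m:ℤ) + n + 2 ≠ 0)]
  split_ifs with h
  · subst h; simp; ring
  · rw [aux_int_cos _ (by omega)]; simp

lemma aux_orth_cos (m n : ℕ) :
    ∫ x in (0:ℝ)..π, cos (((m:ℝ) + 1) * x) * cos (((n:ℝ) + 1) * x)
      = if m = n then π / 2 else 0 := by
  have h1 : ∀ x : ℝ, cos (((m:ℝ) + 1) * x) * cos (((n:ℝ) + 1) * x) =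
      (1/2) * (cos ((((m:ℤ) - n : ℤ) : ℝ) * x) + cos ((((m:ℤ) + n + 2 : ℤ) : ℝ) * x)) := by
    intro x
    push_cast
    rw [show ((m:ℝ) - n) * x = ((m:ℝ) + 1) * x - ((n:ℝ) + 1) * x by ring,
      show ((m:ℝ) + n + 2) * x = ((m:ℝ) + 1) * x + ((n:ℝ) + 1) * x by ring, cos_sub, cos_add]
    ring
  simp_rw [h1]
  rw [intervalIntegral.integral_const_mul, intervalIntegral.integral_add
    (Continuous.intervalIntegrable (by fun_prop) _ _)
    (Continuous.intervalIntegrable (by fun_prop) _ _), aux_int_cos _ (by omega : (m:ℤ) + n + 2 ≠ 0)]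
  split_ifs with h
  · subst h; simp; ring
  · rw [aux_int_cos _ (by omega)]; simp

lemma aux_ii {g : ℝ → ℝ} (hg : ContinuousOn g (Icc 0 π)) :
    IntervalIntegrable g MeasureTheory.volume 0 π :=
  ContinuousOn.intervalIntegrable (by rwa [uIcc_of_le pi_pos.le])

lemma aux_iadd {f g : ℝ → ℝ} (hf : ContinuousOn f (Icc 0 π)) (hg : ContinuousOn g (Icc 0 π)) :
    ∫ x in (0:ℝ)..π, (f x + g x) = (∫ x in (0:ℝ)..π, f x) + ∫ x in (0:ℝ)..π, g x :=
  intervalIntegral.integral_add (aux_ii hf) (aux_ii hg)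

lemma aux_isub {f g : ℝ → ℝ} (hf : ContinuousOn f (Icc 0 π)) (hg : ContinuousOn g (Icc 0 π)) :
    ∫ x in (0:ℝ)..π, (f x - g x) = (∫ x in (0:ℝ)..π, f x) - ∫ x in (0:ℝ)..π, g x :=
  intervalIntegral.integral_sub (aux_ii hf) (aux_ii hg)

lemma aux_bessel (φ : ℕ → ℝ → ℝ) (hφ : ∀ n, Continuous (φ n))
    (ho : ∀ m n, ∫ x in (0:ℝ)..π, φ m x * φ n x = if m = n then π / 2 else 0)
    (g : ℝ → ℝ) (hg : ContinuousOn g (Icc 0 π)) :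
    Summable (fun n => (∫ x in (0:ℝ)..π, g x * φ n x) ^ 2) := by
  set a : ℕ → ℝ := fun n => ∫ x in (0:ℝ)..π, g x * φ n x with ha
  have key : ∀ N : ℕ, ∃ G : ℝ → ℝ, ContinuousOn G (Icc 0 π) ∧
      (∀ j, N ≤ j → ∫ x in (0:ℝ)..π, G x * φ j x = a j) ∧
      ∫ x in (0:ℝ)..π, G x ^ 2 = (∫ x in (0:ℝ)..π, g x ^ 2) -
        (2 / π) * ∑ i ∈ Finset.range N, a i ^ 2 := by
    intro N
    induction N with
    | zero => exact ⟨g, hg, fun j _ => rfl, by simp⟩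
    | succ N ih =>
      obtain ⟨G, hG, hGa, hG2⟩ := ih
      set c := 2 * a N / π with hc
      refine ⟨fun x => G x - c * φ N x, hG.sub (by have := hφ N; fun_prop), ?_, ?_⟩
      · intro j hj
        have : ∀ x, (G x - c * φ N x) * φ j x = G x * φ j x - c * (φ N x * φ j x) := by
          intro x; ring
        simp_rw [this]
        have h1 := hφ N
        have h2 := hφ j
        rw [aux_isub (f := fun x => G x * φ j x) (by fun_prop) (by fun_prop),
          intervalIntegral.integral_const_mul,
          ho, hGa j (by omega), if_neg (by omega)]
        ring
      · have : ∀ x, (G x - c * φ N x) ^ 2 = (G x ^ 2 - (2 * c) * (G x * φ N x)) +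
            c ^ 2 * (φ N x * φ N x) := by
          intro x; ring
        simp_rw [this]
        have h1 := hφ N
        have i1 : IntervalIntegrable (fun x => G x ^ 2) MeasureTheory.volume 0 π := aux_ii (hG.pow 2)
        have i2 : IntervalIntegrable (fun x => (2 * c) * (G x * φ N x)) MeasureTheory.volume 0 π :=
          aux_ii (continuousOn_const.mul (hG.mul h1.continuousOn))
        rw [intervalIntegral.integral_add (i1.sub i2)
          (Continuous.intervalIntegrable (by fun_prop) _ _), intervalIntegral.integral_sub i1 i2,
          intervalIntegral.integral_const_mul, intervalIntegral.integral_const_mul,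
          ho, hGa N le_rfl, if_pos rfl, hG2, Finset.sum_range_succ, hc]
        field_simp
        ring
  refine summable_of_sum_range_le (c := (π / 2) * ∫ x in (0:ℝ)..π, g x ^ 2)
    (fun n => sq_nonneg _) ?_
  intro N
  obtain ⟨G, hG, -, hG2⟩ := key N
  have h0 : 0 ≤ ∫ x in (0:ℝ)..π, G x ^ 2 :=
    intervalIntegral.integral_nonneg pi_pos.le (fun x _ => sq_nonneg _)
  rw [hG2] at h0
  have h1 : (2 / π) * ∑ i ∈ Finset.range N, a i ^ 2 ≤ (∫ x in (0:ℝ)..π, g x ^ 2) := by linarith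
  have h2 := mul_le_mul_of_nonneg_left h1 (by positivity : 0 ≤ π / 2)
  calc _ = (π / 2) * ((2 / π) * ∑ i ∈ Finset.range N, a i ^ 2) := by
        rw [← mul_assoc, show π / 2 * (2 / π) = 1 by field_simp, one_mul]
    _ ≤ _ := h2

lemma aux_complete (h : ℝ → ℝ) (hh : ContinuousOn h (Icc 0 π))
    (h0 : ∀ n : ℕ, ∫ x in (0:ℝ)..π, h x * sin ((n:ℝ) * x) = 0) :
    ∀ x ∈ Icc (0:ℝ) π, h x = 0 := by
  have hk : ∀ k : ℕ, ∀ n : ℕ, ∫ x in (0:ℝ)..π, h x * sin ((n:ℝ) * x) * cos x ^ k = 0 := by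
    intro k
    induction k with
    | zero => intro n; simpa using h0 n
    | succ k ih =>
      intro n
      cases n with
      | zero => simp
      | succ n =>
        have : ∀ x, h x * sin (((n+1 : ℕ):ℝ) * x) * cos x ^ (k+1) =
            (1/2) * (h x * sin (((n+2 : ℕ):ℝ) * x) * cos x ^ k +
              h x * sin ((n:ℝ) * x) * cos x ^ k) := by
          intro x
          push_cast
          rw [show ((n:ℝ) + 2) * x = ((n:ℝ) + 1) * x + x by ring,
            show (n:ℝ) * x = ((n:ℝ) + 1) * x - x by ring, sin_add, sin_sub]
          ring
        simp_rw [this]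
        rw [intervalIntegral.integral_const_mul, aux_iadd, ih, ih]
        · simp
        all_goals fun_prop
  have hp : ∀ p : Polynomial ℝ, ∫ x in (0:ℝ)..π, h x * sin x * p.eval (cos x) = 0 := by
    intro p
    induction p using Polynomial.induction_on' with
    | add p q hp hq =>
      simp_rw [Polynomial.eval_add, mul_add]
      rw [aux_iadd, hp, hq]
      · simp
      all_goals fun_prop
    | monomial k a =>
      have := hk k 1
      simp only [Nat.cast_one, one_mul] at this
      have h2 : ∀ x, h x * sin x * Polynomial.eval (cos x) (Polynomial.monomial k a) =
        a * (h x * sin x * cos x ^ k) := by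
        intro x; rw [Polynomial.eval_monomial]; ring
      simp_rw [h2]
      rw [intervalIntegral.integral_const_mul, this, mul_zero]
  have hcontG : ContinuousOn (fun y => h (arccos y)) (Icc (-1) 1) :=
    hh.comp continuous_arccos.continuousOn (fun y _ => ⟨arccos_nonneg y, arccos_le_pi y⟩)
  obtain ⟨M, hM⟩ := isCompact_Icc.exists_bound_of_continuousOn hh
  have hM0 : 0 ≤ M := (norm_nonneg _).trans (hM 0 ⟨le_rfl, pi_pos.le⟩)
  have hI : ∫ x in (0:ℝ)..π, h x * h x * sin x = 0 := by
    by_contra hne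
    have hpos : 0 < |∫ x in (0:ℝ)..π, h x * h x * sin x| := abs_pos.2 hne
    set I := |∫ x in (0:ℝ)..π, h x * h x * sin x| with hIdef
    obtain ⟨p, hpp⟩ := exists_polynomial_near_of_continuousOn (-1) 1 _ hcontG
      (I / (2 * ((M + 1) * π))) (by positivity)
    have h1 : ∫ x in (0:ℝ)..π, h x * h x * sin x =
        ∫ x in (0:ℝ)..π, h x * sin x * (h x - p.eval (cos x)) := by
      simp_rw [mul_sub]
      rw [aux_isub, hp, sub_zero]
      · congr 1; ext x; ring
      all_goals fun_prop
    have h2 : ‖∫ x in (0:ℝ)..π, h x * sin x * (h x - p.eval (cos x))‖ ≤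
        (M * (I / (2 * ((M + 1) * π)))) * |π - 0| := by
      apply intervalIntegral.norm_integral_le_of_norm_le_const
      intro x hx
      rw [uIoc_of_le pi_pos.le] at hx
      have hx' : x ∈ Icc (0:ℝ) π := ⟨hx.1.le, hx.2⟩
      rw [norm_mul, norm_mul]
      have e1 := hM x hx'
      have e2 : ‖sin x‖ ≤ 1 := by rw [norm_eq_abs]; exact abs_sin_le_one x
      have e3 : ‖h x - p.eval (cos x)‖ ≤ I / (2 * ((M + 1) * π)) := by
        have := (hpp (cos x) ⟨neg_one_le_cos x, cos_le_one x⟩).le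
        rw [arccos_cos hx'.1 hx'.2] at this
        rw [norm_eq_abs, abs_sub_comm]; exact this
      calc _ ≤ M * 1 * (I / (2 * ((M + 1) * π))) := by gcongr
        _ = _ := by ring
    rw [← h1, norm_eq_abs, ← hIdef, sub_zero, abs_of_pos pi_pos] at h2
    have h3 : (M * (I / (2 * ((M + 1) * π)))) * π = (M / (M + 1)) * (I / 2) := by
      field_simp
    have h4 : M / (M + 1) ≤ 1 := by rw [div_le_one (by linarith)]; linarith
    have h5 : (M / (M + 1)) * (I / 2) ≤ 1 * (I / 2) := by gcongr
    linarith
  have hIoo : ∀ x ∈ Ioo (0:ℝ) π, h x = 0 := by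
    intro x hx
    by_contra hne
    have : 0 < ∫ x in (0:ℝ)..π, h x * h x * sin x := by
      apply intervalIntegral.integral_pos pi_pos
      · fun_prop
      · intro y hy
        exact mul_nonneg (mul_self_nonneg _) (sin_nonneg_of_nonneg_of_le_pi hy.1.le hy.2)
      · exact ⟨x, ⟨hx.1.le, hx.2.le⟩, mul_pos (mul_self_pos.2 hne) (sin_pos_of_pos_of_lt_pi hx.1 hx.2)⟩
    linarith
  have hcl : EqOn h (fun _ => 0) (Icc 0 π) := by
    apply EqOn.of_subset_closure (s := Ioo 0 π) hIoo hh continuousOn_const Ioo_subset_Icc_self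
    rw [closure_Ioo pi_pos.ne]
  exact hcl

lemma aux_ibp_sin (g g' : ℝ → ℝ) (hg : ∀ x ∈ Icc (0:ℝ) π, HasDerivWithinAt g (g' x) (Icc 0 π) x)
    (hg' : ContinuousOn g' (Icc 0 π)) (h0 : g 0 = 0) (hπ : g π = 0) (k : ℝ) :
    k * ∫ x in (0:ℝ)..π, g x * sin (k * x) = ∫ x in (0:ℝ)..π, g' x * cos (k * x) := by
  have := intervalIntegral.integral_mul_deriv_eq_deriv_mul_of_hasDerivWithinAt (a := 0) (b := π)
    (u := g) (u' := g') (v := fun x => - cos (k * x)) (v' := fun x => k * sin (k * x))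
    (by rwa [uIcc_of_le pi_pos.le]) ?_ (aux_ii hg') (Continuous.intervalIntegrable (by fun_prop) _ _)
  · rw [h0, hπ] at this
    simp only [mul_neg, intervalIntegral.integral_neg, zero_mul, neg_neg, sub_zero, zero_sub, neg_zero] at this
    rw [← this, ← intervalIntegral.integral_const_mul]
    congr 1; ext x; ring
  · intro x _
    have h1 : HasDerivAt (fun x => k * x) k x := by simpa using (hasDerivAt_id x).const_mul k
    have := (h1.cos).neg.hasDerivWithinAt (s := uIcc 0 π)
    refine this.congr_deriv ?_
    ring

lemma aux_ibp_cos (g g' : ℝ → ℝ) (hg : ∀ x ∈ Icc (0:ℝ) π, HasDerivWithinAt g (g' x) (Icc 0 π) x)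
    (hg' : ContinuousOn g' (Icc 0 π)) (n : ℕ) :
    ((n:ℝ) + 1) * ∫ x in (0:ℝ)..π, g x * cos (((n:ℝ) + 1) * x) =
      - ∫ x in (0:ℝ)..π, g' x * sin (((n:ℝ) + 1) * x) := by
  have hs : sin (((n:ℝ) + 1) * π) = 0 := by exact_mod_cast sin_nat_mul_pi (n + 1)
  set k := (n:ℝ) + 1
  have := intervalIntegral.integral_mul_deriv_eq_deriv_mul_of_hasDerivWithinAt (a := 0) (b := π)
    (u := g) (u' := g') (v := fun x => sin (k * x)) (v' := fun x => k * cos (k * x))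
    (by rwa [uIcc_of_le pi_pos.le]) ?_ (aux_ii hg') (Continuous.intervalIntegrable (by fun_prop) _ _)
  · simp only [hs, mul_zero, sin_zero, sub_zero, zero_sub] at this
    rw [← this, ← intervalIntegral.integral_const_mul]
    congr 1; ext x; ring
  · intro x _
    have h1 : HasDerivAt (fun x => k * x) k x := by simpa using (hasDerivAt_id x).const_mul k
    have := (h1.sin).hasDerivWithinAt (s := uIcc 0 π)
    refine this.congr_deriv ?_
    ring

/-- sine coefficients -/
def aux_sc (f : ℝ → ℝ) (n : ℕ) : ℝ := (2 / π) * ∫ s in (0:ℝ)..π, f s * sin ((n:ℝ) * s)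

lemma aux_summable_mul (d : ℕ → ℝ) (hd : Summable (fun n => d n ^ 2)) :
    Summable (fun n : ℕ => |d n| / ((n:ℝ) + 1)) := by
  have h1 : Summable (fun n : ℕ => (1 / ((n:ℝ) + 1)) ^ 2) := by
    have := (summable_nat_add_iff 1).2 (Real.summable_one_div_nat_pow.2 (le_refl 2))
    refine this.congr (fun n => ?_)
    push_cast
    rw [div_pow, one_pow]
  refine Summable.of_nonneg_of_le (fun n => by positivity) (fun n => ?_) (hd.add h1)
  rw [← sq_abs (d n)]
  have := two_mul_le_add_sq (|d n|) (1 / ((n:ℝ)+1))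
  have h3 : |d n| / ((n:ℝ) + 1) = |d n| * (1 / ((n:ℝ) + 1)) := by ring
  have h4 : 0 ≤ |d n| * (1 / ((n:ℝ) + 1)) := by positivity
  linarith

lemma aux_sc_summable (f : ℝ → ℝ) (hf : IsC1 f) (h0 : f 0 = 0) (hπ : f π = 0) :
    Summable (fun n => |aux_sc f n|) := by
  obtain ⟨f', hf', hd⟩ := hf
  rw [← summable_nat_add_iff 1]
  have hB := aux_bessel (fun n x => cos (((n:ℝ) + 1) * x)) (fun n => by fun_prop) aux_orth_cos f' hf'
  refine ((aux_summable_mul _ hB).mul_left (2 / π)).congr (fun n => ?_)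
  rw [← aux_ibp_sin f f' hd hf' h0 hπ ((n:ℝ) + 1), aux_sc, abs_mul, abs_mul,
    abs_of_pos (by positivity : 0 < 2 / π), abs_of_pos (by positivity : 0 < (n:ℝ) + 1)]
  push_cast
  field_simp

lemma aux_series_cont (b : ℕ → ℝ) (hb : Summable (fun n => |b n|)) :
    Continuous (fun x => ∑' n, b n * sin ((n:ℝ) * x)) := by
  refine continuous_tsum (fun n => by fun_prop) hb (fun n x => ?_)
  rw [norm_mul, norm_eq_abs, norm_eq_abs]
  exact mul_le_of_le_one_right (abs_nonneg _) (abs_sin_le_one _)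

lemma aux_sc_series (b : ℕ → ℝ) (hb : Summable (fun n => |b n|)) (m : ℕ) :
    aux_sc (fun x => ∑' n, b n * sin ((n:ℝ) * x)) (m + 1) = b (m + 1) := by
  have h1 := intervalIntegral.hasSum_integral_of_dominated_convergence (a := 0) (b := π)
    (μ := MeasureTheory.volume)
    (F := fun n x => b n * sin ((n:ℝ) * x) * sin (((m + 1 : ℕ):ℝ) * x))
    (f := fun x => (∑' n, b n * sin ((n:ℝ) * x)) * sin (((m + 1 : ℕ):ℝ) * x))
    (bound := fun n _ => |b n|) (fun n => (by fun_prop : Continuous _).aestronglyMeasurable)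
    (fun n => Filter.Eventually.of_forall fun x _ => ?_)
    (Filter.Eventually.of_forall fun x _ => hb)
    (by simp) (Filter.Eventually.of_forall fun x _ => ?_)
  · rw [aux_sc, ← h1.tsum_eq, tsum_eq_single (m + 1)]
    · have := aux_orth_sin m m
      rw [if_pos rfl] at this
      push_cast
      simp_rw [mul_assoc]
      rw [intervalIntegral.integral_const_mul, this]
      field_simp
    · intro n hn
      cases n with
      | zero => simp
      | succ n =>
        have := aux_orth_sin n m
        rw [if_neg (by omega)] at this
        push_cast
        simp_rw [mul_assoc]
        rw [intervalIntegral.integral_const_mul, this, mul_zero]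
  · rw [norm_mul, norm_mul, norm_eq_abs, norm_eq_abs, norm_eq_abs]
    have e1 := abs_sin_le_one ((n:ℝ) * x)
    have e2 := abs_sin_le_one (((m + 1 : ℕ):ℝ) * x)
    calc _ ≤ |b n| * 1 * 1 := by gcongr
      _ = _ := by ring
  · refine (Summable.hasSum ?_).mul_right _
    refine Summable.of_norm_bounded hb (fun n => ?_)
    rw [norm_mul, norm_eq_abs, norm_eq_abs]
    exact mul_le_of_le_one_right (abs_nonneg _) (abs_sin_le_one _)

lemma aux_sc_zero (f : ℝ → ℝ) : aux_sc f 0 = 0 := by simp [aux_sc]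

lemma aux_sc_ext (f g : ℝ → ℝ) (hf : ContinuousOn f (Icc 0 π)) (hg : ContinuousOn g (Icc 0 π))
    (h : ∀ n : ℕ, aux_sc f (n + 1) = aux_sc g (n + 1)) : ∀ x ∈ Icc (0:ℝ) π, f x = g x := by
  have := aux_complete (fun x => f x - g x) (hf.sub hg) ?_
  · intro x hx
    exact sub_eq_zero.1 (this x hx)
  · intro n
    cases n with
    | zero => simp
    | succ n =>
      simp_rw [sub_mul]
      rw [aux_isub, sub_eq_zero]
      · exact mul_left_cancel₀ (by positivity : (2 / π) ≠ 0) (h n)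
      all_goals fun_prop

lemma aux_series_eq (f : ℝ → ℝ) (hf : IsC1 f) (h0 : f 0 = 0) (hπ : f π = 0) :
    ∀ x ∈ Icc (0:ℝ) π, ∑' n, aux_sc f n * sin ((n:ℝ) * x) = f x := by
  have hs := aux_sc_summable f hf h0 hπ
  obtain ⟨f', hf', hd⟩ := hf
  exact aux_sc_ext _ _ (aux_series_cont _ hs).continuousOn
    (fun x hx => (hd x hx).continuousWithinAt) (aux_sc_series _ hs)

/-- Duhamel factor -/
def aux_E (ρ : ℝ → ℝ) (n : ℕ) (t : ℝ) : ℝ := ∫ s in (0:ℝ)..t, exp (-(n:ℝ) ^ 2 * (t - s)) * ρ s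

lemma aux_E_eq (ρ : ℝ → ℝ) (n : ℕ) (t : ℝ) :
    aux_E ρ n t = exp (-(n:ℝ) ^ 2 * t) * ∫ s in (0:ℝ)..t, exp ((n:ℝ) ^ 2 * s) * ρ s := by
  rw [aux_E, ← intervalIntegral.integral_const_mul]
  congr 1; ext s
  rw [← mul_assoc, ← exp_add]
  congr 2; ring

lemma aux_E_deriv (ρ : ℝ → ℝ) (hρ : Continuous ρ) (n : ℕ) (t : ℝ) :
    HasDerivAt (aux_E ρ n) (ρ t - (n:ℝ) ^ 2 * aux_E ρ n t) t := by
  have h0 : aux_E ρ n = fun t => exp (-(n:ℝ) ^ 2 * t) * ∫ s in (0:ℝ)..t, exp ((n:ℝ) ^ 2 * s) * ρ s :=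
    funext (aux_E_eq ρ n)
  have hc : Continuous (fun s => exp ((n:ℝ) ^ 2 * s) * ρ s) := by fun_prop
  have h1 : HasDerivAt (fun t => ∫ s in (0:ℝ)..t, exp ((n:ℝ) ^ 2 * s) * ρ s)
      (exp ((n:ℝ) ^ 2 * t) * ρ t) t := hc.integral_hasStrictDerivAt 0 t |>.hasDerivAt
  have h2 : HasDerivAt (fun t => exp (-(n:ℝ) ^ 2 * t)) (exp (-(n:ℝ) ^ 2 * t) * (-(n:ℝ)^2)) t := by
    have : HasDerivAt (fun t => -(n:ℝ) ^ 2 * t) (-(n:ℝ)^2) t := by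
      simpa using (hasDerivAt_id t).const_mul (-(n:ℝ) ^ 2)
    exact this.exp
  rw [h0]
  refine (h2.mul h1).congr_deriv ?_
  have h3 : exp (-(n:ℝ) ^ 2 * t) * exp ((n:ℝ) ^ 2 * t) = 1 := by
    rw [← exp_add]; simp
  simp only
  rw [← mul_assoc (exp (-(n:ℝ) ^ 2 * t)) (exp ((n:ℝ) ^ 2 * t)), h3]
  ring

lemma aux_E_cont (ρ : ℝ → ℝ) (hρ : Continuous ρ) (n : ℕ) : Continuous (aux_E ρ n) :=
  continuous_iff_continuousAt.2 (fun t => (aux_E_deriv ρ hρ n t).continuousAt)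

lemma aux_E_bound1 (ρ : ℝ → ℝ) (n : ℕ) (t M : ℝ) (ht : 0 ≤ t)
    (hM : ∀ s ∈ Icc (0:ℝ) t, |ρ s| ≤ M) : |aux_E ρ n t| ≤ M * t := by
  have := intervalIntegral.norm_integral_le_of_norm_le_const (a := 0) (b := t) (C := M)
    (f := fun s => exp (-(n:ℝ) ^ 2 * (t - s)) * ρ s) ?_
  · rwa [sub_zero, abs_of_nonneg ht] at this
  · intro s hs
    rw [uIoc_of_le ht] at hs
    have h1 : exp (-(n:ℝ) ^ 2 * (t - s)) ≤ 1 := by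
      apply exp_le_one_iff.2
      have : 0 ≤ (n:ℝ) ^ 2 * (t - s) := mul_nonneg (sq_nonneg _) (by linarith [hs.2])
      linarith
    have h2 := hM s ⟨hs.1.le, hs.2⟩
    rw [norm_mul, norm_eq_abs, norm_eq_abs, abs_of_pos (exp_pos _)]
    calc _ ≤ 1 * M := by gcongr
      _ = M := one_mul M

lemma aux_exp_int (k t : ℝ) : k * ∫ s in (0:ℝ)..t, exp (-k * (t - s)) = 1 - exp (-k * t) := by
  rw [← intervalIntegral.integral_const_mul]
  have : ∀ s ∈ uIcc 0 t, HasDerivAt (fun s => exp (-k * (t - s))) (k * exp (-k * (t - s))) s := by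
    intro s _
    have h1 : HasDerivAt (fun s => -k * (t - s)) k s := by
      refine (((hasDerivAt_id s).const_sub t).const_mul (-k)).congr_deriv ?_
      ring
    refine h1.exp.congr_deriv ?_
    ring
  rw [intervalIntegral.integral_eq_sub_of_hasDerivAt this
    (Continuous.intervalIntegrable (by fun_prop) _ _)]
  simp

lemma aux_E_bound2 (ρ : ℝ → ℝ) (n : ℕ) (t M : ℝ) (ht : 0 ≤ t)
    (hM : ∀ s ∈ Icc (0:ℝ) t, |ρ s| ≤ M) : (n:ℝ) ^ 2 * |aux_E ρ n t| ≤ M := by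
  have hM0 : 0 ≤ M := (abs_nonneg _).trans (hM 0 ⟨le_rfl, ht⟩)
  have := intervalIntegral.norm_integral_le_of_norm_le (a := 0) (b := t) (μ := MeasureTheory.volume)
    (f := fun s => exp (-(n:ℝ) ^ 2 * (t - s)) * ρ s)
    (g := fun s => exp (-(n:ℝ) ^ 2 * (t - s)) * M) ht
    (Filter.Eventually.of_forall ?_) (Continuous.intervalIntegrable (by fun_prop) _ _)
  · rw [intervalIntegral.integral_mul_const] at this
    calc (n:ℝ) ^ 2 * |aux_E ρ n t|
        ≤ (n:ℝ) ^ 2 * ((∫ s in (0:ℝ)..t, exp (-(n:ℝ) ^ 2 * (t - s))) * M) := by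
          gcongr
          exact this
      _ = (1 - exp (-(n:ℝ) ^ 2 * t)) * M := by rw [← mul_assoc, aux_exp_int]
      _ ≤ 1 * M := by
          gcongr
          linarith [exp_pos (-(n:ℝ) ^ 2 * t)]
      _ = M := one_mul M
  · intro s hs
    have h2 := hM s ⟨hs.1.le, hs.2⟩
    rw [norm_mul, norm_eq_abs, norm_eq_abs, abs_of_pos (exp_pos _)]
    gcongr

lemma aux_exists (T : ℝ) (f ρ : ℝ → ℝ) (hρ : Continuous ρ) (b : ℕ → ℝ)
    (hb : Summable (fun n => |b n|))
    (hf : ∀ x ∈ Icc (0:ℝ) π, ∑' n, b n * sin ((n:ℝ) * x) = f x) :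
    IsClassicalSolution T (fun x t => f x * ρ t)
      (fun x t => ∑' n, b n * (sin ((n:ℝ) * x) * aux_E ρ n t)) := by
  obtain ⟨M, hM⟩ := (isCompact_Icc (a := (0:ℝ)) (b := T)).exists_bound_of_continuousOn
    hρ.continuousOn
  have hMt : ∀ t ∈ Icc (0:ℝ) T, ∀ s ∈ Icc (0:ℝ) t, |ρ s| ≤ M := fun t ht s hs =>
    hM s ⟨hs.1, hs.2.trans ht.2⟩
  have hE1 : ∀ t ∈ Icc (0:ℝ) T, ∀ n, |aux_E ρ n t| ≤ M * T := by
    intro t ht n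
    have hM0 : 0 ≤ M := (norm_nonneg _).trans (hM t ht)
    calc _ ≤ M * t := aux_E_bound1 ρ n t M ht.1 (hMt t ht)
      _ ≤ M * T := by gcongr; exact ht.2
  have hE2 : ∀ t ∈ Icc (0:ℝ) T, ∀ n : ℕ, (n:ℝ) ^ 2 * |aux_E ρ n t| ≤ M :=
    fun t ht n => aux_E_bound2 ρ n t M ht.1 (hMt t ht)
  have hE3 : ∀ t ∈ Icc (0:ℝ) T, ∀ n : ℕ, (n:ℝ) * |aux_E ρ n t| ≤ M := by
    intro t ht n
    refine le_trans ?_ (hE2 t ht n)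
    gcongr
    exact_mod_cast Nat.le_self_pow two_ne_zero n
  have hEc := aux_E_cont ρ hρ
  have hu0 : ∀ x, ∀ t ∈ Icc (0:ℝ) T, ∀ n : ℕ,
      ‖b n * (sin ((n:ℝ) * x) * aux_E ρ n t)‖ ≤ |b n| * (M * T) := by
    intro x t ht n
    rw [norm_mul, norm_mul, norm_eq_abs, norm_eq_abs, norm_eq_abs]
    have e1 := abs_sin_le_one ((n:ℝ) * x)
    have e2 := hE1 t ht n
    calc _ ≤ |b n| * (1 * (M * T)) := by gcongr
      _ = _ := by ring
  have hu1 : ∀ x, ∀ t ∈ Icc (0:ℝ) T, ∀ n : ℕ,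
      ‖b n * ((n * cos ((n:ℝ) * x)) * aux_E ρ n t)‖ ≤ |b n| * M := by
    intro x t ht n
    rw [norm_mul, norm_mul, norm_mul, norm_eq_abs, norm_eq_abs, norm_eq_abs, norm_eq_abs,
      Nat.abs_cast]
    have e1 := abs_cos_le_one ((n:ℝ) * x)
    have e2 := hE3 t ht n
    calc _ = |b n| * (|cos (n * x)| * (n * |aux_E ρ n t|)) := by ring
      _ ≤ |b n| * (1 * M) := by gcongr
      _ = _ := by ring
  have hu2 : ∀ x, ∀ t ∈ Icc (0:ℝ) T, ∀ n : ℕ,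
      ‖b n * ((-((n:ℝ) ^ 2) * sin ((n:ℝ) * x)) * aux_E ρ n t)‖ ≤ |b n| * M := by
    intro x t ht n
    rw [norm_mul, norm_mul, norm_mul, norm_eq_abs, norm_eq_abs, norm_eq_abs, norm_eq_abs,
      abs_neg, abs_of_nonneg (sq_nonneg (n:ℝ))]
    have e1 := abs_sin_le_one ((n:ℝ) * x)
    have e2 := hE2 t ht n
    calc _ = |b n| * (|sin (n * x)| * ((n:ℝ)^2 * |aux_E ρ n t|)) := by ring
      _ ≤ |b n| * (1 * M) := by gcongr
      _ = _ := by ring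
  have hu3 : ∀ x, ∀ t ∈ Icc (0:ℝ) T, ∀ n : ℕ,
      ‖b n * (sin ((n:ℝ) * x) * (ρ t - (n:ℝ) ^ 2 * aux_E ρ n t))‖ ≤ |b n| * (2 * M) := by
    intro x t ht n
    rw [norm_mul, norm_mul, norm_eq_abs, norm_eq_abs, norm_eq_abs]
    have e1 := abs_sin_le_one ((n:ℝ) * x)
    have e2 := hE2 t ht n
    have e3 : |ρ t - (n:ℝ) ^ 2 * aux_E ρ n t| ≤ 2 * M := by
      refine (abs_sub _ _).trans ?_
      rw [abs_mul, abs_of_nonneg (sq_nonneg (n:ℝ))]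
      have := hM t ht
      rw [norm_eq_abs] at this
      linarith
    calc _ ≤ |b n| * (1 * (2 * M)) := by gcongr
      _ = _ := by ring
  have hsub : Ioo (0:ℝ) T ⊆ Icc 0 T := Ioo_subset_Icc_self
  refine ⟨?_, ?_, ?_, fun x t => ∑' n, b n * (sin ((n:ℝ) * x) * (ρ t - (n:ℝ) ^ 2 * aux_E ρ n t)),
    fun x t => ∑' n, b n * ((n * cos ((n:ℝ) * x)) * aux_E ρ n t),
    fun x t => ∑' n, b n * ((-((n:ℝ) ^ 2) * sin ((n:ℝ) * x)) * aux_E ρ n t), ?_, ?_, ?_⟩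
  · refine continuousOn_tsum (fun n => ?_) (hb.mul_right (M * T)) (fun n p hp => hu0 p.1 p.2 hp.2 n)
    have := hEc n
    fun_prop
  · intro x _
    simp [aux_E]
  · intro t _
    simp
  · refine continuousOn_tsum (fun n => ?_) (hb.mul_right (2 * M))
      (fun n p hp => hu3 p.1 p.2 (hsub hp.2) n)
    have := hEc n
    fun_prop
  · refine continuousOn_tsum (fun n => ?_) (hb.mul_right M)
      (fun n p hp => hu2 p.1 p.2 (hsub hp.2) n)
    have := hEc n
    fun_prop
  · intro x hx t ht
    have ht' := hsub ht
    refine ⟨?_, ?_, ?_, ?_⟩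
    · refine hasDerivAt_tsum_of_isPreconnected (hb.mul_right (2 * M)) isOpen_Ioo
        (isPreconnected_Ioo) (fun n y _ => ?_) (fun n y hy => hu3 x y (hsub hy) n) ht ?_ ht
      · exact ((aux_E_deriv ρ hρ n y).const_mul _).const_mul _
      · exact Summable.of_norm_bounded (hb.mul_right (M * T)) (hu0 x t ht')
    · refine hasDerivAt_tsum (y₀ := x) (hb.mul_right M) (fun n y => ?_) (fun n y => hu1 y t ht' n) ?_ x
      · refine HasDerivAt.const_mul _ (HasDerivAt.mul_const ?_ _)
        have h1 : HasDerivAt (fun y => (n:ℝ) * y) n y := by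
          simpa using (hasDerivAt_id y).const_mul (n:ℝ)
        exact h1.sin.congr_deriv (by ring)
      · exact Summable.of_norm_bounded (hb.mul_right (M * T)) (hu0 x t ht')
    · refine hasDerivAt_tsum (y₀ := x) (hb.mul_right M) (fun n y => ?_) (fun n y => hu2 y t ht' n) ?_ x
      · refine HasDerivAt.const_mul _ (HasDerivAt.mul_const ?_ _)
        have h1 : HasDerivAt (fun y => (n:ℝ) * y) n y := by
          simpa using (hasDerivAt_id y).const_mul (n:ℝ)
        exact (h1.cos.const_mul (n:ℝ)).congr_deriv (by ring)
      · exact Summable.of_norm_bounded (hb.mul_right M) (hu1 x t ht')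
    · have s1 : Summable (fun n : ℕ => b n * ((-((n:ℝ) ^ 2) * sin ((n:ℝ) * x)) * aux_E ρ n t)) :=
        Summable.of_norm_bounded (hb.mul_right M) (hu2 x t ht')
      have s2 : Summable (fun n : ℕ => b n * sin ((n:ℝ) * x)) := by
        refine Summable.of_norm_bounded hb (fun n => ?_)
        rw [norm_mul, norm_eq_abs, norm_eq_abs]
        exact mul_le_of_le_one_right (abs_nonneg _) (abs_sin_le_one _)
      simp only
      rw [← hf x ⟨hx.1.le, hx.2.le⟩, ← tsum_mul_right, ← s1.tsum_add (s2.mul_right _)]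
      congr 1; ext n; ring

lemma aux_exists' (T : ℝ) (hT : 0 < T) (f ρ : ℝ → ℝ) (hρ : ContinuousOn ρ (Icc 0 T)) (b : ℕ → ℝ)
    (hb : Summable (fun n => |b n|))
    (hf : ∀ x ∈ Icc (0:ℝ) π, ∑' n, b n * sin ((n:ℝ) * x) = f x) :
    ∃ u, IsClassicalSolution T (fun x t => f x * ρ t) u ∧ ∀ x, ∀ t ∈ Icc (0:ℝ) T,
      u x t = ∑' n, b n * (sin ((n:ℝ) * x) * aux_E ρ n t) := by
  set ρ' : ℝ → ℝ := IccExtend hT.le (fun x : Icc (0:ℝ) T => ρ x) with hρ'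
  have hc : Continuous ρ' := (continuousOn_iff_continuous_domRestrict.1 hρ).Icc_extend'
  have he : ∀ t ∈ Icc (0:ℝ) T, ρ' t = ρ t := fun t ht => by
    rw [hρ', IccExtend_of_mem _ _ ht]
  obtain ⟨a1, a2, a3, ut, ux, uxx, a4, a5, a6⟩ := aux_exists T f ρ' hc b hb hf
  refine ⟨fun x t => ∑' n, b n * (sin ((n:ℝ) * x) * aux_E ρ' n t),
    ⟨a1, a2, a3, ut, ux, uxx, a4, a5, ?_⟩, ?_⟩
  · intro x hx t ht
    obtain ⟨b1, b2, b3, b4⟩ := a6 x hx t ht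
    refine ⟨b1, b2, b3, ?_⟩
    simp only [b4, he t ⟨ht.1.le, ht.2.le⟩]
  · intro x t ht
    refine tsum_congr (fun n => ?_)
    congr 2
    apply intervalIntegral.integral_congr
    intro s hs
    rw [uIcc_of_le ht.1] at hs
    simp only
    rw [he s ⟨hs.1, hs.2.trans ht.2⟩]

lemma aux_avg (t0 : ℝ) (ht0 : 0 ≤ t0) (g : ℝ → ℝ → ℝ)
    (hc : ContinuousOn (fun p : ℝ × ℝ => g p.1 p.2) (Icc 0 t0 ×ˢ Ici 0))
    (hper : ∀ t ∈ Icc (0:ℝ) t0, ∀ τ ∈ Ici (0:ℝ), g t (τ + 2 * π) = g t τ)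
    (hzero : ∀ t ∈ Icc (0:ℝ) t0, (∫ τ in (0:ℝ)..(2 * π), g t τ) = 0) :
    Filter.Tendsto (fun ω : ℝ => ∫ s in (0:ℝ)..t0, g s (ω * s)) Filter.atTop (nhds 0) := by
  have hpi := pi_pos
  have hperk : ∀ k : ℕ, ∀ t ∈ Icc (0:ℝ) t0, ∀ τ ∈ Ici (0:ℝ), g t (τ + 2 * π * k) = g t τ := by
    intro k t ht τ hτ
    induction k with
    | zero => simp
    | succ k ih =>
      rw [← ih, ← hper t ht (τ + 2 * π * k) (mem_Ici.2 (add_nonneg hτ (by positivity)))]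
      push_cast
      congr 1; ring
  have hred : ∀ τ ∈ Ici (0:ℝ), ∃ τ' ∈ Icc (0:ℝ) (2 * π), ∀ t ∈ Icc (0:ℝ) t0, g t τ = g t τ' := by
    intro τ hτ
    have hτ0 : 0 ≤ τ := hτ
    have h1 := Nat.floor_le (show 0 ≤ τ / (2 * π) by positivity)
    have h2 := Nat.lt_floor_add_one (τ / (2 * π))
    set k := ⌊τ / (2 * π)⌋₊
    rw [le_div_iff₀ (by positivity)] at h1
    rw [div_lt_iff₀ (by positivity)] at h2
    have h3 : 0 ≤ τ - 2 * π * k := by nlinarith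
    refine ⟨τ - 2 * π * k, ⟨h3, by nlinarith⟩, fun t ht => ?_⟩
    rw [← hperk k t ht (τ - 2 * π * k) h3]
    congr 1; ring
  have hKc : IsCompact (Icc (0:ℝ) t0 ×ˢ Icc (0:ℝ) (2 * π)) := isCompact_Icc.prod isCompact_Icc
  have hKcont : ContinuousOn (fun p : ℝ × ℝ => g p.1 p.2) (Icc (0:ℝ) t0 ×ˢ Icc (0:ℝ) (2 * π)) :=
    hc.mono (prod_mono le_rfl Icc_subset_Ici_self)
  obtain ⟨M, hM⟩ := hKc.exists_bound_of_continuousOn hKcont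
  have hMb : ∀ t ∈ Icc (0:ℝ) t0, ∀ τ ∈ Ici (0:ℝ), |g t τ| ≤ M := by
    intro t ht τ hτ
    obtain ⟨τ', h1, h2⟩ := hred τ hτ
    rw [h2 t ht]
    exact hM (t, τ') ⟨ht, h1⟩
  have hM0 : 0 ≤ M := (abs_nonneg _).trans (hMb 0 ⟨le_rfl, ht0⟩ 0 self_mem_Ici)
  have huc := Metric.uniformContinuousOn_iff.1 (hKc.uniformContinuousOn_of_continuous hKcont)
  rw [Metric.tendsto_atTop]
  intro ε hε
  obtain ⟨δ, hδ, hδ'⟩ := huc (ε / (2 * (t0 + 1))) (by positivity)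
  set η := ε / (2 * (t0 + 1)) with hη
  have hηpos : 0 < η := by positivity
  have hunif : ∀ τ ∈ Ici (0:ℝ), ∀ s ∈ Icc (0:ℝ) t0, ∀ s' ∈ Icc (0:ℝ) t0, |s - s'| < δ →
      |g s τ - g s' τ| ≤ η := by
    intro τ hτ s hs s' hs' h
    obtain ⟨τ', h1, h2⟩ := hred τ hτ
    rw [h2 s hs, h2 s' hs']
    have := hδ' (s, τ') ⟨hs, h1⟩ (s', τ') ⟨hs', h1⟩ (by
      rw [Prod.dist_eq]; simp [Real.dist_eq, h])
    exact this.le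
  refine ⟨max 1 (max (4 * π / δ) (4 * π * (M + 1) / ε)), fun ω hω => ?_⟩
  have hω1 : 1 ≤ ω := (le_max_left _ _).trans hω
  have hω2 : 4 * π / δ ≤ ω := (le_max_left _ _).trans ((le_max_right _ _).trans hω)
  have hω3 : 4 * π * (M + 1) / ε ≤ ω := (le_max_right _ _).trans ((le_max_right _ _).trans hω)
  have hωpos : 0 < ω := by linarith
  set L := 2 * π / ω with hL
  have hLpos : 0 < L := by positivity
  have hLδ : L < δ := by
    rw [div_le_iff₀ hδ] at hω2
    rw [hL, div_lt_iff₀ hωpos]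
    nlinarith
  have hLM : M * L < ε / 2 := by
    rw [div_le_iff₀ hε] at hω3
    rw [hL, ← mul_div_assoc, div_lt_iff₀ hωpos]
    nlinarith
  have hωL : ω * L = 2 * π := by rw [hL]; field_simp
  have hgc : ContinuousOn (fun s => g s (ω * s)) (Icc 0 t0) :=
    hc.comp (f := fun s => (s, ω * s)) (by fun_prop)
      (fun s hs => ⟨hs, mul_nonneg hωpos.le hs.1⟩)
  have hgi : ∀ a b, 0 ≤ a → a ≤ b → b ≤ t0 →
      IntervalIntegrable (fun s => g s (ω * s)) MeasureTheory.volume a b := by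
    intro a b ha hab hb
    apply ContinuousOn.intervalIntegrable
    rw [uIcc_of_le hab]
    exact hgc.mono (Icc_subset_Icc ha hb)
  have hstep : ∀ k : ℕ, ((k:ℝ) + 1) * L ≤ t0 →
      |∫ s in ((k:ℝ) * L)..(((k:ℝ) + 1) * L), g s (ω * s)| ≤ η * L := by
    intro k hk
    have hkL : 0 ≤ (k:ℝ) * L := by positivity
    have hkk : (k:ℝ) * L ≤ ((k:ℝ) + 1) * L := by nlinarith
    have hkm : (k:ℝ) * L ∈ Icc (0:ℝ) t0 := ⟨hkL, hkk.trans hk⟩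
    have hgk : ContinuousOn (fun s => g (k * L) (ω * s)) (Ici 0) :=
      hc.comp (f := fun s => ((k:ℝ) * L, ω * s)) (by fun_prop)
        (fun s hs => ⟨hkm, mul_nonneg hωpos.le hs⟩)
    have hz : ∫ s in ((k:ℝ) * L)..(((k:ℝ) + 1) * L), g (k * L) (ω * s) = 0 := by
      rw [intervalIntegral.integral_comp_mul_left (fun τ => g (k * L) τ) hωpos.ne']
      have e1 : ω * (k * L) = 0 + 2 * π * k := by rw [← hωL]; ring
      have e2 : ω * ((k + 1) * L) = 2 * π + 2 * π * k := by rw [← hωL]; ring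
      rw [e1, e2, ← intervalIntegral.integral_comp_add_right (fun τ => g (k * L) τ) (2 * π * k)]
      have : ∫ τ in (0:ℝ)..(2 * π), g (k * L) (τ + 2 * π * k) = ∫ τ in (0:ℝ)..(2 * π), g (k * L) τ := by
        apply intervalIntegral.integral_congr
        intro τ hτ
        rw [uIcc_of_le (by positivity)] at hτ
        exact hperk k _ hkm τ hτ.1
      rw [this, hzero _ hkm, smul_zero]
    have hsub : ∫ s in ((k:ℝ) * L)..(((k:ℝ) + 1) * L), g s (ω * s) =
        ∫ s in ((k:ℝ) * L)..(((k:ℝ) + 1) * L), (g s (ω * s) - g (k * L) (ω * s)) := by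
      rw [intervalIntegral.integral_sub (hgi _ _ hkL hkk hk), hz, sub_zero]
      apply ContinuousOn.intervalIntegrable
      rw [uIcc_of_le hkk]
      exact hgk.mono (fun s hs => hkL.trans hs.1)
    rw [hsub]
    have := intervalIntegral.norm_integral_le_of_norm_le_const (a := (k:ℝ) * L)
      (b := ((k:ℝ) + 1) * L) (C := η) (f := fun s => g s (ω * s) - g (k * L) (ω * s)) ?_
    · rw [norm_eq_abs, show ((k:ℝ) + 1) * L - k * L = L by ring, abs_of_pos hLpos] at this
      exact this
    · intro s hs
      rw [uIoc_of_le hkk] at hs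
      have hs0 : 0 ≤ s := hkL.trans hs.1.le
      refine hunif (ω * s) (mul_nonneg hωpos.le hs0) s ⟨hs0, hs.2.trans hk⟩ _ hkm ?_
      rw [abs_of_pos (by linarith [hs.1])]
      have := hs.2
      nlinarith
  have hsum : ∀ k : ℕ, (k:ℝ) * L ≤ t0 → |∫ s in (0:ℝ)..((k:ℝ) * L), g s (ω * s)| ≤ k * (η * L) := by
    intro k
    induction k with
    | zero => simp
    | succ k ih =>
      intro hk
      push_cast at hk ⊢
      have hkL : 0 ≤ (k:ℝ) * L := by positivity
      have hkk : (k:ℝ) * L ≤ ((k:ℝ) + 1) * L := by nlinarith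
      rw [← intervalIntegral.integral_add_adjacent_intervals (hgi _ _ le_rfl hkL (hkk.trans hk))
        (hgi _ _ hkL hkk hk)]
      have h1 := ih (hkk.trans hk)
      have h2 := hstep k hk
      refine (abs_add_le _ _).trans ?_
      linarith
  have hf1 := Nat.floor_le (show 0 ≤ t0 / L by positivity)
  have hf2 := Nat.lt_floor_add_one (t0 / L)
  set N := ⌊t0 / L⌋₊
  rw [le_div_iff₀ hLpos] at hf1
  rw [div_lt_iff₀ hLpos] at hf2
  have hNL : 0 ≤ (N:ℝ) * L := by positivity
  have hlast : |∫ s in ((N:ℝ) * L)..t0, g s (ω * s)| ≤ M * L := by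
    have := intervalIntegral.norm_integral_le_of_norm_le_const (a := (N:ℝ) * L)
      (b := t0) (C := M) (f := fun s => g s (ω * s)) ?_
    · rw [norm_eq_abs, abs_of_nonneg (by linarith : 0 ≤ t0 - N * L)] at this
      refine this.trans ?_
      gcongr
      linarith
    · intro s hs
      rw [uIoc_of_le hf1] at hs
      have hs0 : 0 ≤ s := hNL.trans hs.1.le
      exact hMb s ⟨hs0, hs.2⟩ _ (mul_nonneg hωpos.le hs0)
  rw [dist_zero_right, norm_eq_abs, ← intervalIntegral.integral_add_adjacent_intervals
    (hgi _ _ le_rfl hNL hf1) (hgi _ _ hNL hf1 le_rfl)]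
  have h1 := hsum N hf1
  have h2 : N * (η * L) ≤ ε / 2 := by
    calc N * (η * L) = η * (N * L) := by ring
      _ ≤ η * (t0 + 1) := by gcongr; linarith
      _ = ε / 2 := by rw [hη]; field_simp
  have := abs_add_le (∫ s in (0:ℝ)..((N:ℝ) * L), g s (ω * s)) (∫ s in ((N:ℝ) * L)..t0, g s (ω * s))
  linarith

lemma aux_E_lower (t0 : ℝ) (ht0 : 0 < t0) (r : ℝ → ℝ) (hr : ContinuousOn r (Icc 0 t0))
    (hne : r t0 ≠ 0) : ∃ c > 0, ∃ N : ℕ, ∀ n ≥ N, c ≤ (n:ℝ) ^ 2 * |aux_E r n t0| := by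
  obtain ⟨M, hM⟩ := isCompact_Icc.exists_bound_of_continuousOn hr
  have ht0m : t0 ∈ Icc (0:ℝ) t0 := ⟨ht0.le, le_rfl⟩
  have hM0 : 0 ≤ M := (norm_nonneg _).trans (hM t0 ht0m)
  set η := |r t0| / 4 with hη
  have hηpos : 0 < η := by positivity
  obtain ⟨δ, hδ, hδ'⟩ := Metric.continuousOn_iff.1 hr t0 ht0m η hηpos
  set K := 2 * M / δ with hK
  have hK0 : 0 ≤ K := by positivity
  have hbd : ∀ s ∈ Icc (0:ℝ) t0, |r s - r t0| ≤ η + K * (t0 - s) := by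
    intro s hs
    have hts : 0 ≤ t0 - s := sub_nonneg.2 hs.2
    by_cases h : dist s t0 < δ
    · have h1 := (hδ' s hs h).le
      rw [Real.dist_eq] at h1
      have : 0 ≤ K * (t0 - s) := by positivity
      linarith
    · push Not at h
      rw [Real.dist_eq, abs_sub_comm, abs_of_nonneg hts] at h
      have h1 : 2 * M ≤ K * (t0 - s) := by
        calc 2 * M = K * δ := by rw [hK]; field_simp
          _ ≤ _ := by gcongr
      have h2 := abs_sub (r s) (r t0)
      have h3 := hM s hs
      have h4 := hM t0 ht0m
      rw [norm_eq_abs] at h3 h4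
      linarith
  obtain ⟨N, hN⟩ := exists_nat_ge (max (4 * K / η) (4 / t0) + 1)
  refine ⟨η, hηpos, N, fun n hn => ?_⟩
  have hn' : (N:ℝ) ≤ n := by exact_mod_cast hn
  have hmx1 := le_max_left (4 * K / η) (4 / t0)
  have hmx2 := le_max_right (4 * K / η) (4 / t0)
  have hpos4 : 0 < 4 / t0 := by positivity
  have hn1 : 1 ≤ (n:ℝ) := by linarith
  set k := (n:ℝ) ^ 2 with hk
  have hkn : (n:ℝ) ≤ k := by rw [hk]; nlinarith
  have hkpos : 0 < k := by linarith
  have hk1 : 4 * K / k ≤ η := by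
    have : 4 * K / η ≤ k := by linarith
    rw [div_le_iff₀ hηpos] at this
    rw [div_le_iff₀ hkpos]; linarith
  have hk2 : exp (-k * t0) ≤ 1 / 4 := by
    have h1 : 4 / t0 ≤ k := by linarith
    rw [div_le_iff₀ ht0] at h1
    have h2 := add_one_le_exp (k * t0)
    rw [neg_mul, exp_neg, ← one_div]
    apply one_div_le_one_div_of_le <;> linarith
  -- main decomposition
  have hc1 : ContinuousOn (fun s => exp (-k * (t0 - s)) * (r s - r t0)) (Icc 0 t0) := by fun_prop
  have hi1 : IntervalIntegrable (fun s => exp (-k * (t0 - s)) * (r s - r t0))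
      MeasureTheory.volume 0 t0 := by
    apply ContinuousOn.intervalIntegrable
    rwa [uIcc_of_le ht0.le]
  have hdec : aux_E r n t0 = (∫ s in (0:ℝ)..t0, exp (-k * (t0 - s)) * (r s - r t0)) +
      (∫ s in (0:ℝ)..t0, exp (-k * (t0 - s))) * r t0 := by
    rw [← intervalIntegral.integral_mul_const, ← intervalIntegral.integral_add hi1
      (Continuous.intervalIntegrable (by fun_prop) _ _), aux_E]
    congr 1; ext s
    rw [hk]; ring
  have hj1 : IntervalIntegrable (fun s => exp (-k * (t0 - s)) * η) MeasureTheory.volume 0 t0 :=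
    Continuous.intervalIntegrable (by fun_prop) _ _
  have hj2 : IntervalIntegrable (fun s => (K * (2 / k)) * exp (-(k / 2) * (t0 - s)))
      MeasureTheory.volume 0 t0 := Continuous.intervalIntegrable (by fun_prop) _ _
  have hrem : |∫ s in (0:ℝ)..t0, exp (-k * (t0 - s)) * (r s - r t0)| ≤
      ∫ s in (0:ℝ)..t0, (exp (-k * (t0 - s)) * η + (K * (2 / k)) * exp (-(k / 2) * (t0 - s))) := by
    refine intervalIntegral.norm_integral_le_of_norm_le (E := ℝ) (a := 0) (b := t0)
      (μ := MeasureTheory.volume) ht0.le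
      (f := fun s => exp (-k * (t0 - s)) * (r s - r t0)) (Filter.Eventually.of_forall ?_) (hj1.add hj2)
    intro s hs
    have h2 := hbd s ⟨hs.1.le, hs.2⟩
    rw [norm_mul, norm_eq_abs, norm_eq_abs, abs_of_pos (exp_pos _)]
    have hts : 0 ≤ t0 - s := sub_nonneg.2 hs.2
    set σ := t0 - s
    have h3 : exp (-k * σ) * σ ≤ (2 / k) * exp (-(k / 2) * σ) := by
      have e1 : exp (-k * σ) = exp (-(k / 2) * σ) * exp (-(k / 2) * σ) := by
        rw [← exp_add]; congr 1; ring
      have e2 : σ * exp (-(k / 2) * σ) ≤ 2 / k := by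
        have := add_one_le_exp ((k / 2) * σ)
        rw [neg_mul, exp_neg, ← div_eq_mul_inv, div_le_iff₀ (exp_pos _), div_mul_eq_mul_div,
          le_div_iff₀ hkpos]
        linarith
      calc _ = (σ * exp (-(k / 2) * σ)) * exp (-(k / 2) * σ) := by rw [e1]; ring
        _ ≤ _ := by gcongr
    calc exp (-k * σ) * |r s - r t0| ≤ exp (-k * σ) * (η + K * σ) := by gcongr
      _ = exp (-k * σ) * η + K * (exp (-k * σ) * σ) := by ring
      _ ≤ exp (-k * σ) * η + K * ((2 / k) * exp (-(k / 2) * σ)) := by gcongr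
      _ = _ := by ring
  rw [intervalIntegral.integral_add hj1 hj2, intervalIntegral.integral_mul_const,
    intervalIntegral.integral_const_mul] at hrem
  have hA := aux_exp_int k t0
  have hB := aux_exp_int (k / 2) t0
  set A := ∫ s in (0:ℝ)..t0, exp (-k * (t0 - s))
  set B := ∫ s in (0:ℝ)..t0, exp (-(k / 2) * (t0 - s))
  set R := ∫ s in (0:ℝ)..t0, exp (-k * (t0 - s)) * (r s - r t0)
  have hA1 : k * A ≤ 1 := by rw [hA]; linarith [exp_pos (-k * t0)]
  have hA2 : 3 / 4 ≤ k * A := by rw [hA]; linarith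
  have hB1 : k / 2 * B ≤ 1 := by rw [hB]; linarith [exp_pos (-(k / 2) * t0)]
  have hkR : k * |R| ≤ η + η := by
    calc k * |R| ≤ k * (A * η + K * (2 / k) * B) := by gcongr
      _ = (k * A) * η + (4 * K / k) * (k / 2 * B) := by field_simp; ring
      _ ≤ 1 * η + (4 * K / k) * 1 := by gcongr
      _ ≤ η + η := by linarith
  have hlow : k * |A * r t0| - k * |R| ≤ k * |aux_E r n t0| := by
    rw [hdec, ← mul_sub]
    gcongr
    have := abs_sub_abs_le_abs_sub (A * r t0) (-R)
    rw [abs_neg, sub_neg_eq_add, add_comm (A * r t0)] at this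
    exact this
  have hAr : 3 * η ≤ k * |A * r t0| := by
    have h0 : 0 ≤ A := by
      by_contra h
      push Not at h
      nlinarith
    rw [abs_mul, abs_of_nonneg h0, ← mul_assoc]
    have : 3 / 4 * |r t0| ≤ k * A * |r t0| := by gcongr
    have h4 : |r t0| = 4 * η := by rw [hη]; ring
    rw [h4] at this ⊢
    linarith
  linarith

lemma aux_limit (T : ℝ) (hT : 0 < T)
    (r0 : ℝ → ℝ) (r1 : ℝ → ℝ → ℝ)
    (hr0 : ContinuousOn r0 (Icc 0 T))
    (hper : ∀ t ∈ Icc (0:ℝ) T, ∀ τ ∈ Ici (0:ℝ), r1 t (τ + 2 * π) = r1 t τ)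
    (hzero : ∀ t ∈ Icc (0:ℝ) T, (∫ τ in (0:ℝ)..(2 * π), r1 t τ) = 0)
    (hr1c : ContinuousOn (fun p : ℝ × ℝ => r1 p.1 p.2) (Icc 0 T ×ˢ Ici 0))
    (t₀ : ℝ) (ht₀ : t₀ ∈ Ioc 0 T)
    (f : ℝ → ℝ) (hf : IsC1 f) (hf0 : f 0 = 0) (hfπ : f π = 0) :
    (∃ u : ℝ → ℝ → ℝ → ℝ, ∀ ω : ℝ, 1 ≤ ω →
      IsClassicalSolution T (fun x t => f x * (r0 t + r1 t (ω * t))) (u ω)) ∧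
    ∀ u : ℝ → ℝ → ℝ → ℝ,
    (∀ ω : ℝ, 1 ≤ ω →
      IsClassicalSolution T (fun x t => f x * (r0 t + r1 t (ω * t))) (u ω)) →
    ∀ ε > 0, ∃ ω₀ ≥ (1:ℝ), ∀ ω ≥ ω₀, ∀ x ∈ Icc (0:ℝ) π,
      |u ω x t₀ - ∑' n, (aux_sc f n * aux_E r0 n t₀) * sin ((n:ℝ) * x)| ≤ ε := by
  have hb := aux_sc_summable f hf hf0 hfπ
  have hser := aux_series_eq f hf hf0 hfπ
  have ht0m : t₀ ∈ Icc (0:ℝ) T := ⟨ht₀.1.le, ht₀.2⟩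
  have hsubT : Icc 0 t₀ ⊆ Icc 0 T := Icc_subset_Icc_right ht₀.2
  have hr1ω : ∀ ω : ℝ, 1 ≤ ω → ContinuousOn (fun t => r1 t (ω * t)) (Icc 0 T) := by
    intro ω hω
    exact hr1c.comp (f := fun s => (s, ω * s)) (by fun_prop)
      (fun s hs => ⟨hs, mul_nonneg (by linarith) hs.1⟩)
  have hex : ∀ ω : ℝ, ∃ u : ℝ → ℝ → ℝ, 1 ≤ ω →
      (IsClassicalSolution T (fun x t => f x * (r0 t + r1 t (ω * t))) u ∧
      ∀ x, ∀ t ∈ Icc (0:ℝ) T, u x t = ∑' n, aux_sc f n * (sin ((n:ℝ) * x) *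
        aux_E (fun t => r0 t + r1 t (ω * t)) n t)) := by
    intro ω
    by_cases hω : 1 ≤ ω
    · obtain ⟨u, h1, h2⟩ := aux_exists' T hT f (fun t => r0 t + r1 t (ω * t))
        (hr0.add (hr1ω ω hω)) (aux_sc f) hb hser
      exact ⟨u, fun _ => ⟨h1, h2⟩⟩
    · exact ⟨fun _ _ => 0, fun h => absurd h hω⟩
  choose v hv using hex
  refine ⟨⟨v, fun ω hω => (hv ω hω).1⟩, ?_⟩
  intro u hu ε hε
  -- bound for `r1`
  obtain ⟨M, hM⟩ : ∃ M, ∀ t ∈ Icc (0:ℝ) T, ∀ τ ∈ Ici (0:ℝ), |r1 t τ| ≤ M := by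
    obtain ⟨M, hM⟩ := ((isCompact_Icc (a := (0:ℝ)) (b := T)).prod
      (isCompact_Icc (a := (0:ℝ)) (b := 2 * π))).exists_bound_of_continuousOn
      (hr1c.mono (prod_mono le_rfl Icc_subset_Ici_self))
    refine ⟨M, fun t ht τ hτ => ?_⟩
    have hpi := pi_pos
    have hτ0 : 0 ≤ τ := hτ
    have hperk : ∀ k : ℕ, ∀ τ ∈ Ici (0:ℝ), r1 t (τ + 2 * π * k) = r1 t τ := by
      intro k τ hτ
      induction k with
      | zero => simp
      | succ k ih =>
        rw [← ih, ← hper t ht (τ + 2 * π * k) (mem_Ici.2 (add_nonneg hτ (by positivity)))]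
        push_cast
        congr 1; ring
    have h1 := Nat.floor_le (show 0 ≤ τ / (2 * π) by positivity)
    have h2 := Nat.lt_floor_add_one (τ / (2 * π))
    set k := ⌊τ / (2 * π)⌋₊
    rw [le_div_iff₀ (by positivity)] at h1
    rw [div_lt_iff₀ (by positivity)] at h2
    have h3 : 0 ≤ τ - 2 * π * k := by nlinarith
    have h4 := hperk k (τ - 2 * π * k) h3
    rw [sub_add_cancel] at h4
    rw [h4]
    exact hM (t, τ - 2 * π * k) ⟨ht, h3, by nlinarith⟩
  have hDb : ∀ ω : ℝ, 1 ≤ ω → ∀ n, |aux_E (fun t => r1 t (ω * t)) n t₀| ≤ M * t₀ := by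
    intro ω hω n
    refine aux_E_bound1 _ n t₀ M ht₀.1.le (fun s hs => hM s (hsubT hs) _ ?_)
    exact mul_nonneg (by linarith) hs.1
  have hDlim : ∀ n : ℕ, Filter.Tendsto (fun ω : ℝ => aux_E (fun t => r1 t (ω * t)) n t₀)
      Filter.atTop (nhds 0) := by
    intro n
    refine aux_avg t₀ ht₀.1.le (fun s τ => exp (-(n:ℝ) ^ 2 * (t₀ - s)) * r1 s τ) ?_ ?_ ?_
    · refine ContinuousOn.mul (by fun_prop) (hr1c.mono (prod_mono hsubT le_rfl))
    · intro t ht τ hτ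
      simp only [hper t (hsubT ht) τ hτ]
    · intro t ht
      simp only [intervalIntegral.integral_const_mul, hzero t (hsubT ht), mul_zero]
  have hsumlim : Filter.Tendsto
      (fun ω : ℝ => ∑' n, |aux_sc f n| * |aux_E (fun t => r1 t (ω * t)) n t₀|)
      Filter.atTop (nhds 0) := by
    have := tendsto_tsum_of_dominated_convergence (𝓕 := Filter.atTop)
      (f := fun (ω : ℝ) n => |aux_sc f n| * |aux_E (fun t => r1 t (ω * t)) n t₀|)
      (g := fun _ => (0:ℝ)) (bound := fun n => |aux_sc f n| * (M * t₀)) (hb.mul_right _) ?_ ?_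
    · simpa using this
    · intro n
      have := ((hDlim n).abs).const_mul (|aux_sc f n|)
      simpa using this
    · filter_upwards [Filter.eventually_ge_atTop 1] with ω hω n
      rw [norm_mul, norm_eq_abs, norm_eq_abs, abs_abs, abs_abs]
      gcongr
      exact hDb ω hω n
  obtain ⟨ω₁, hω₁⟩ := Filter.eventually_atTop.1 (hsumlim.eventually (ge_mem_nhds hε))
  refine ⟨max 1 ω₁, le_max_left _ _, fun ω hω x hx => ?_⟩
  have hω1 : 1 ≤ ω := (le_max_left _ _).trans hω
  rw [aux_unique T hT _ _ _ (hu ω hω1) (hv ω hω1).1 x hx t₀ ht0m, (hv ω hω1).2 x t₀ ht0m]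
  have hadd : ∀ n, aux_E (fun t => r0 t + r1 t (ω * t)) n t₀ =
      aux_E r0 n t₀ + aux_E (fun t => r1 t (ω * t)) n t₀ := by
    intro n
    simp only [aux_E, mul_add]
    have c0 := hr0.mono hsubT
    have c1 := (hr1ω ω hω1).mono hsubT
    apply intervalIntegral.integral_add
    · apply ContinuousOn.intervalIntegrable
      rw [uIcc_of_le ht₀.1.le]
      exact ContinuousOn.mul (by fun_prop) c0
    · apply ContinuousOn.intervalIntegrable
      rw [uIcc_of_le ht₀.1.le]
      exact ContinuousOn.mul (by fun_prop) c1
  obtain ⟨M0, hM0⟩ := isCompact_Icc.exists_bound_of_continuousOn (hr0.mono hsubT)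
  have s1 : Summable (fun n => (aux_sc f n * aux_E r0 n t₀) * sin ((n:ℝ) * x)) := by
    refine Summable.of_norm_bounded (hb.mul_right (M0 * t₀)) (fun n => ?_)
    rw [norm_mul, norm_mul, norm_eq_abs, norm_eq_abs, norm_eq_abs]
    have e1 := aux_E_bound1 r0 n t₀ M0 ht₀.1.le hM0
    calc _ ≤ (|aux_sc f n| * (M0 * t₀)) * 1 := by
          have hM00 : 0 ≤ M0 * t₀ := (abs_nonneg _).trans e1
          exact mul_le_mul (mul_le_mul_of_nonneg_left e1 (abs_nonneg _)) (abs_sin_le_one _)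
            (abs_nonneg _) (mul_nonneg (abs_nonneg _) hM00)
      _ = _ := by ring
  have hnb : ∀ n : ℕ, ‖aux_sc f n * (sin ((n:ℝ) * x) * aux_E (fun t => r1 t (ω * t)) n t₀)‖ ≤
      |aux_sc f n| * |aux_E (fun t => r1 t (ω * t)) n t₀| := by
    intro n
    rw [norm_mul, norm_mul, norm_eq_abs, norm_eq_abs, norm_eq_abs]
    gcongr
    exact mul_le_of_le_one_left (abs_nonneg _) (abs_sin_le_one _)
  have s3 : Summable (fun n => |aux_sc f n| * |aux_E (fun t => r1 t (ω * t)) n t₀|) := by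
    refine Summable.of_nonneg_of_le (fun n => by positivity) (fun n => ?_) (hb.mul_right (M * t₀))
    gcongr
    exact hDb ω hω1 n
  have s2 : Summable (fun n : ℕ => aux_sc f n * (sin ((n:ℝ) * x) *
      aux_E (fun t => r1 t (ω * t)) n t₀)) := Summable.of_norm_bounded s3 hnb
  have heq : ∑' n, aux_sc f n * (sin ((n:ℝ) * x) * aux_E (fun t => r0 t + r1 t (ω * t)) n t₀) =
      (∑' n, (aux_sc f n * aux_E r0 n t₀) * sin ((n:ℝ) * x)) +
      ∑' n, aux_sc f n * (sin ((n:ℝ) * x) * aux_E (fun t => r1 t (ω * t)) n t₀) := by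
    rw [← s1.tsum_add s2]
    refine tsum_congr (fun n => ?_)
    rw [hadd]; ring
  rw [heq, add_sub_cancel_left]
  calc _ ≤ ∑' n, |aux_sc f n| * |aux_E (fun t => r1 t (ω * t)) n t₀| :=
        tsum_of_norm_bounded s3.hasSum hnb
    _ ≤ ε := hω₁ ω ((le_max_right _ _).trans hω)

lemma aux_char (T : ℝ) (hT : 0 < T)
    (r0 : ℝ → ℝ) (r1 : ℝ → ℝ → ℝ)
    (hr0 : ContinuousOn r0 (Icc 0 T))
    (hper : ∀ t ∈ Icc (0:ℝ) T, ∀ τ ∈ Ici (0:ℝ), r1 t (τ + 2 * π) = r1 t τ)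
    (hzero : ∀ t ∈ Icc (0:ℝ) T, (∫ τ in (0:ℝ)..(2 * π), r1 t τ) = 0)
    (hr1c : ContinuousOn (fun p : ℝ × ℝ => r1 p.1 p.2) (Icc 0 T ×ˢ Ici 0))
    (t₀ : ℝ) (ht₀ : t₀ ∈ Ioc 0 T) (ψ : ℝ → ℝ) (hψ : ContinuousOn ψ (Icc 0 π)) (f : ℝ → ℝ) :
    SolvesProblem2 T t₀ r0 r1 ψ f ↔ (IsC1 f ∧ f 0 = 0 ∧ f π = 0 ∧
      ∀ n : ℕ, aux_sc ψ (n + 1) = aux_sc f (n + 1) * aux_E r0 (n + 1) t₀) := by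
  unfold SolvesProblem2
  refine and_congr_right (fun hf => and_congr_right (fun hf0 => and_congr_right (fun hfπ => ?_)))
  obtain ⟨⟨v, hv⟩, hlim⟩ := aux_limit T hT r0 r1 hr0 hper hzero hr1c t₀ ht₀ f hf hf0 hfπ
  have hb := aux_sc_summable f hf hf0 hfπ
  obtain ⟨M0, hM0⟩ := isCompact_Icc.exists_bound_of_continuousOn
    (hr0.mono (Icc_subset_Icc_right ht₀.2))
  have hbΛ : Summable (fun n => |aux_sc f n * aux_E r0 n t₀|) := by
    refine Summable.of_nonneg_of_le (fun n => abs_nonneg _) (fun n => ?_) (hb.mul_right (M0 * t₀))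
    rw [abs_mul]
    gcongr
    exact aux_E_bound1 r0 n t₀ M0 ht₀.1.le hM0
  have hsc := aux_sc_series _ hbΛ
  have hUc := aux_series_cont _ hbΛ
  set U : ℝ → ℝ := fun x => ∑' n, (aux_sc f n * aux_E r0 n t₀) * sin ((n:ℝ) * x) with hU
  constructor
  · intro h n
    rw [← hsc n]
    have heq : ∀ x ∈ Icc (0:ℝ) π, ψ x = U x := by
      intro x hx
      refine eq_of_forall_dist_le (fun ε hε => ?_)
      rw [Real.dist_eq]
      obtain ⟨w1, -, h1⟩ := h v hv (ε / 2) (by positivity)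
      obtain ⟨w2, -, h2⟩ := hlim v hv (ε / 2) (by positivity)
      have a1 := h1 (max w1 w2) (le_max_left _ _) x hx
      have a2 := h2 (max w1 w2) (le_max_right _ _) x hx
      have a3 := abs_sub_le (ψ x) (v (max w1 w2) x t₀) (U x)
      rw [abs_sub_comm (ψ x) (v (max w1 w2) x t₀)] at a3
      have a4 : |v (max w1 w2) x t₀ - U x| ≤ ε / 2 := a2
      linarith
    unfold aux_sc
    congr 1
    apply intervalIntegral.integral_congr
    intro s hs
    rw [uIcc_of_le pi_pos.le] at hs
    simp only [heq s hs]
  · intro h u hu ε hε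
    have heq := aux_sc_ext ψ U hψ hUc.continuousOn (fun n => by rw [h n, ← hsc n])
    obtain ⟨w, hw, h1⟩ := hlim u hu ε hε
    refine ⟨w, hw, fun ω hω x hx => ?_⟩
    rw [heq x hx]
    exact h1 ω hω x hx

lemma aux_build (c : ℕ → ℝ) (hc : Summable (fun n : ℕ => (n:ℝ) * |c n|)) (hc0 : c 0 = 0) :
    ∃ f : ℝ → ℝ, IsC1 f ∧ f 0 = 0 ∧ f π = 0 ∧ ∀ n, aux_sc f (n + 1) = c (n + 1) := by
  have hle : ∀ n : ℕ, |c n| ≤ (n:ℝ) * |c n| := by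
    intro n
    cases n with
    | zero => simp [hc0]
    | succ n =>
      push_cast
      nlinarith [abs_nonneg (c (n+1)), (Nat.cast_nonneg n : (0:ℝ) ≤ n)]
  have hs : Summable (fun n => |c n|) := Summable.of_nonneg_of_le (fun n => abs_nonneg _) hle hc
  have hbd : ∀ (n : ℕ) (x : ℝ), ‖c n * (n * cos ((n:ℝ) * x))‖ ≤ (n:ℝ) * |c n| := by
    intro n x
    rw [norm_mul, norm_mul, norm_eq_abs, norm_eq_abs, norm_eq_abs, Nat.abs_cast]
    calc _ = ((n:ℝ) * |c n|) * |cos (n * x)| := by ring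
      _ ≤ _ := mul_le_of_le_one_right (by positivity) (abs_cos_le_one _)
  refine ⟨fun x => ∑' n, c n * sin ((n:ℝ) * x), ⟨fun x => ∑' n, c n * (n * cos ((n:ℝ) * x)), ?_, ?_⟩,
    by simp, by simp, aux_sc_series c hs⟩
  · exact (continuous_tsum (fun n => by fun_prop) hc hbd).continuousOn
  · intro x _
    refine HasDerivAt.hasDerivWithinAt ?_
    refine hasDerivAt_tsum (y₀ := 0) hc (fun n y => ?_) hbd (by simp) x
    have h1 : HasDerivAt (fun y => (n:ℝ) * y) n y := by
      simpa using (hasDerivAt_id y).const_mul (n:ℝ)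
    exact (h1.sin.const_mul (c n)).congr_deriv (by ring)


/-- **Theorem 4, part 2.** Suppose `M₀ = {n ≥ 1 : Λ_n = 0} ≠ ∅`. Then Problem 2 is
solvable iff `ψ_n = 0` for every `n ∈ M₀`, and in that case the solutions are exactly
the `C¹` functions vanishing at `0, π` whose sine coefficients equal `ψ_n/Λ_n` for
`n ∉ M₀` (those with `n ∈ M₀` being arbitrary). -/
theorem problem2_degenerate_case
    (T : ℝ) (hT : 0 < T)
    (r0 : ℝ → ℝ) (r1 : ℝ → ℝ → ℝ)
    (hr0 : ContinuousOn r0 (Icc 0 T))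
    (hper : ∀ t ∈ Icc (0:ℝ) T, ∀ τ ∈ Ici (0:ℝ), r1 t (τ + 2 * π) = r1 t τ)
    (hzero : ∀ t ∈ Icc (0:ℝ) T, (∫ τ in (0:ℝ)..(2 * π), r1 t τ) = 0)
    (α : ℝ) (hα : α ∈ Ioo (0:ℝ) 1) (C : ℝ)
    (hr1c : ContinuousOn (fun p : ℝ × ℝ => r1 p.1 p.2) (Icc 0 T ×ˢ Ici 0))
    (hr1hold : ∀ τ ∈ Ici (0:ℝ), ∀ t ∈ Icc (0:ℝ) T, ∀ t' ∈ Icc (0:ℝ) T,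
      |r1 t τ - r1 t' τ| ≤ C * |t - t'| ^ α)
    (t₀ : ℝ) (ht₀ : t₀ ∈ Ioc 0 T) (hr0t₀ : r0 t₀ ≠ 0)
    (Λ : ℕ → ℝ)
    (hΛ : ∀ n : ℕ, Λ n = ∫ s in (0:ℝ)..t₀, exp (-(n:ℝ) ^ 2 * (t₀ - s)) * r0 s)
    (ψ ψ1 ψ2 ψ3 ψ4 : ℝ → ℝ)
    (hψ1 : ∀ x ∈ Icc (0:ℝ) π, HasDerivWithinAt ψ (ψ1 x) (Icc 0 π) x)
    (hψ2 : ∀ x ∈ Icc (0:ℝ) π, HasDerivWithinAt ψ1 (ψ2 x) (Icc 0 π) x)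
    (hψ3 : ∀ x ∈ Icc (0:ℝ) π, HasDerivWithinAt ψ2 (ψ3 x) (Icc 0 π) x)
    (hψ4 : ∀ x ∈ Icc (0:ℝ) π, HasDerivWithinAt ψ3 (ψ4 x) (Icc 0 π) x)
    (hψ4c : ContinuousOn ψ4 (Icc 0 π))
    (hψb : ψ 0 = 0 ∧ ψ π = 0 ∧ ψ2 0 = 0 ∧ ψ2 π = 0 ∧ ψ4 0 = 0 ∧ ψ4 π = 0)
    (ψc : ℕ → ℝ)
    (hψc : ∀ n : ℕ, ψc n = (2 / π) * ∫ s in (0:ℝ)..π, ψ s * sin ((n:ℝ) * s))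
    -- `M₀ ≠ ∅`
    (hM₀ : ∃ n : ℕ, Λ (n + 1) = 0) :
    -- Problem 2 is solvable iff `ψ_n = 0` for all `n ∈ M₀`
    ((∃ f : ℝ → ℝ, SolvesProblem2 T t₀ r0 r1 ψ f) ↔
      (∀ n : ℕ, Λ (n + 1) = 0 → ψc (n + 1) = 0)) ∧
    -- in the solvable case, the solution set is exactly as described
    ((∀ n : ℕ, Λ (n + 1) = 0 → ψc (n + 1) = 0) →
      ∀ f : ℝ → ℝ,
        SolvesProblem2 T t₀ r0 r1 ψ f ↔
          (IsC1 f ∧ f 0 = 0 ∧ f π = 0 ∧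
            ∀ n : ℕ, Λ (n + 1) ≠ 0 →
              (2 / π) * (∫ s in (0:ℝ)..π, f s * sin (((n:ℝ) + 1) * s)) =
                ψc (n + 1) / Λ (n + 1))) := by
  have hψcont : ContinuousOn ψ (Icc 0 π) := fun x hx => (hψ1 x hx).continuousWithinAt
  have hψ1c : ContinuousOn ψ1 (Icc 0 π) := fun x hx => (hψ2 x hx).continuousWithinAt
  have hψ2c : ContinuousOn ψ2 (Icc 0 π) := fun x hx => (hψ3 x hx).continuousWithinAt
  have hψ3c : ContinuousOn ψ3 (Icc 0 π) := fun x hx => (hψ4 x hx).continuousWithinAt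
  have hΛE : ∀ n, Λ n = aux_E r0 n t₀ := hΛ
  have hψE : ∀ n, ψc n = aux_sc ψ n := hψc
  have hchar : ∀ f, SolvesProblem2 T t₀ r0 r1 ψ f ↔ (IsC1 f ∧ f 0 = 0 ∧ f π = 0 ∧
      ∀ n : ℕ, ψc (n + 1) = aux_sc f (n + 1) * Λ (n + 1)) := by
    intro f
    rw [aux_char T hT r0 r1 hr0 hper hzero hr1c t₀ ht₀ ψ hψcont f]
    simp only [hψE, hΛE]
  have hcoef : ∀ f : ℝ → ℝ, ∀ n : ℕ,
      (2 / π) * (∫ s in (0:ℝ)..π, f s * sin (((n:ℝ) + 1) * s)) = aux_sc f (n + 1) := by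
    intro f n
    simp [aux_sc]
  have hiff : (∀ n : ℕ, Λ (n + 1) = 0 → ψc (n + 1) = 0) →
      ∀ f : ℝ → ℝ,
        SolvesProblem2 T t₀ r0 r1 ψ f ↔
          (IsC1 f ∧ f 0 = 0 ∧ f π = 0 ∧
            ∀ n : ℕ, Λ (n + 1) ≠ 0 →
              (2 / π) * (∫ s in (0:ℝ)..π, f s * sin (((n:ℝ) + 1) * s)) =
                ψc (n + 1) / Λ (n + 1)) := by
    intro hM f
    rw [hchar f]
    simp only [hcoef]
    refine and_congr_right (fun _ => and_congr_right (fun _ => and_congr_right (fun _ => ?_)))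
    refine forall_congr' (fun n => ?_)
    constructor
    · intro h hne
      rw [eq_div_iff hne, h]
    · intro h
      by_cases hne : Λ (n + 1) = 0
      · rw [hM n hne, hne, mul_zero]
      · exact ((eq_div_iff hne).1 (h hne)).symm
  refine ⟨⟨?_, ?_⟩, hiff⟩
  · rintro ⟨f, hf⟩ n hn
    have := ((hchar f).1 hf).2.2.2 n
    rw [this, hn, mul_zero]
  · intro hM
    obtain ⟨c, hc, N, hN⟩ := aux_E_lower t₀ ht₀.1 r0
      (hr0.mono (Icc_subset_Icc_right ht₀.2)) hr0t₀
    set d : ℕ → ℝ := fun n => ∫ x in (0:ℝ)..π, ψ4 x * sin (((n:ℝ) + 1) * x) with hd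
    have hB : Summable (fun n => d n ^ 2) :=
      aux_bessel (fun n x => sin (((n:ℝ) + 1) * x)) (fun n => by fun_prop) aux_orth_sin ψ4 hψ4c
    have hψd : ∀ n : ℕ, ((n:ℝ) + 1) ^ 4 * ψc (n + 1) = (2 / π) * d n := by
      intro n
      have e1 := aux_ibp_sin ψ ψ1 hψ1 hψ1c hψb.1 hψb.2.1 ((n:ℝ) + 1)
      have e2 := aux_ibp_cos ψ1 ψ2 hψ2 hψ2c n
      have e3 := aux_ibp_sin ψ2 ψ3 hψ3 hψ3c hψb.2.2.1 hψb.2.2.2.1 ((n:ℝ) + 1)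
      have e4 := aux_ibp_cos ψ3 ψ4 hψ4 hψ4c n
      rw [← e1] at e2
      rw [← e3] at e4
      rw [hψc]
      push_cast
      have e5 : ((n:ℝ) + 1) ^ 4 * ∫ s in (0:ℝ)..π, ψ s * sin (((n:ℝ) + 1) * s) = d n := by
        rw [hd]
        linear_combination ((n:ℝ) + 1) ^ 2 * e2 - e4
      rw [← e5]; ring
    have hsum : Summable (fun n : ℕ => (n:ℝ) * |ψc n / Λ n|) := by
      have h1 := ((aux_summable_mul d hB).mul_left ((2 / π) / c))
      rw [← summable_nat_add_iff 1, ← summable_nat_add_iff N]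
      rw [← summable_nat_add_iff N] at h1
      refine Summable.of_nonneg_of_le (fun n => by positivity) (fun n => ?_) h1
      set m := n + N with hm
      have hmN : N ≤ m + 1 := by omega
      have h2 := hN (m + 1) hmN
      rw [← hΛE] at h2
      push_cast at h2 ⊢
      have hm1 : 0 < (m:ℝ) + 1 := by positivity
      have hΛpos : 0 < |Λ (m + 1)| := by
        by_contra h
        have h0 : |Λ (m + 1)| = 0 := le_antisymm (not_lt.1 h) (abs_nonneg _)
        rw [h0, mul_zero] at h2
        linarith
      have h3 : ((m:ℝ) + 1) ^ 4 * |ψc (m + 1)| = (2 / π) * |d m| := by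
        have := congrArg abs (hψd m)
        rwa [abs_mul, abs_mul, abs_of_pos (by positivity : 0 < ((m:ℝ) + 1) ^ 4),
          abs_of_pos (by positivity : 0 < 2 / π)] at this
      rw [abs_div]
      have h4 : (2 / π) / c * (|d m| / ((m:ℝ) + 1)) = ((m:ℝ) + 1) ^ 3 * |ψc (m + 1)| / c := by
        rw [div_mul_div_comm, ← h3]
        field_simp
      rw [h4, ← mul_div_assoc, div_le_div_iff₀ hΛpos hc]
      calc ((m:ℝ) + 1) * |ψc (m + 1)| * c
          ≤ ((m:ℝ) + 1) * |ψc (m + 1)| * (((m:ℝ) + 1) ^ 2 * |Λ (m + 1)|) := by gcongr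
        _ = _ := by ring
    obtain ⟨f, hf, hf0, hfπ, hfc⟩ := aux_build (fun n => ψc n / Λ n) hsum (by simp [hψc])
    refine ⟨f, (hiff hM f).2 ⟨hf, hf0, hfπ, fun n _ => ?_⟩⟩
    rw [hcoef, hfc]
end
end

section
/- Among the numbers Λ_n, n ≥ 1, at most finitely many are zero. Moreover there exist an index n₀ and a number a₀ > 0 such that |Λ_n| ≥ a₀ n^{-2} for all n ≥ n₀. -/
open Real Set

noncomputable section

theorem aux_pos (t₀ : ℝ) (ht : 0 < t₀) (r : ℝ → ℝ) (hr : ContinuousOn r (Icc 0 t₀))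
    (hp : 0 < r t₀) : ∃ M : ℝ, 1 ≤ M ∧ ∃ a > (0:ℝ), ∀ m : ℝ, M ≤ m →
      a / m ≤ ∫ s in (0:ℝ)..t₀, exp (-m * (t₀ - s)) * r s := by
  set ε := r t₀ / 2 with hε
  have hε0 : 0 < ε := by positivity
  obtain ⟨K, hK0, hK⟩ : ∃ K : ℝ, 0 ≤ K ∧ ∀ s ∈ Icc 0 t₀, ε - K * (t₀ - s) ≤ r s := by
    obtain ⟨C, hC⟩ := isCompact_Icc.exists_bound_of_continuousOn hr
    have hC0 : 0 ≤ C := le_trans (norm_nonneg _) (hC t₀ ⟨ht.le, le_rfl⟩)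
    obtain ⟨δ, hδ, h⟩ := Metric.continuousWithinAt_iff.1 (hr t₀ ⟨ht.le, le_rfl⟩) ε hε0
    refine ⟨(C + ε) / δ, by positivity, fun s hs => ?_⟩
    have hts : 0 ≤ t₀ - s := by linarith [hs.2]
    by_cases hd : t₀ - s < δ
    · have h1 := h hs (by rw [Real.dist_eq, abs_sub_comm, abs_of_nonneg hts]; exact hd)
      rw [Real.dist_eq] at h1
      have h2 := (abs_lt.1 h1).1
      have : 0 ≤ (C + ε) / δ * (t₀ - s) := by positivity
      linarith
    · push Not at hd
      have h1 := hC s hs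
      rw [Real.norm_eq_abs] at h1
      have h2 := (abs_le.1 h1).1
      have : (C + ε) / δ * δ ≤ (C + ε) / δ * (t₀ - s) := by gcongr
      rw [div_mul_cancel₀ _ hδ.ne'] at this
      linarith
  have he : exp (-t₀) < 1 := by rw [Real.exp_lt_one_iff]; linarith
  refine ⟨max 1 (2 * K / ε), le_max_left _ _, ε / 2 * (1 - exp (-t₀)),
    mul_pos (by positivity) (by linarith), fun m hm => ?_⟩
  have hm1 : 1 ≤ m := (le_max_left _ _).trans hm
  have hm2 : 2 * K / ε ≤ m := (le_max_right _ _).trans hm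
  have hm0 : 0 < m := by linarith
  have hKm : K / m ≤ ε / 2 := by
    rw [div_le_iff₀ hε0] at hm2
    rw [div_le_iff₀ hm0]
    linarith
  have hint : ∫ s in (0:ℝ)..t₀, exp (-m * (t₀ - s)) * (ε - K * (t₀ - s)) =
      (ε - K / m) / m - exp (-m * t₀) * ((ε - K / m) / m - K / m * t₀) := by
    have hd : ∀ s ∈ uIcc 0 t₀, HasDerivAt
        (fun s => exp (-m * (t₀ - s)) * ((ε - K / m) / m - K / m * (t₀ - s)))
        (exp (-m * (t₀ - s)) * (ε - K * (t₀ - s))) s := by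
      intro s _
      have h0 : HasDerivAt (fun s => t₀ - s) (-1) s := by
        simpa using (hasDerivAt_id s).const_sub t₀
      have h1 := (h0.const_mul (-m)).exp
      have h2 := (h0.const_mul (K / m)).const_sub ((ε - K / m) / m)
      refine (h1.mul h2).congr_deriv ?_
      field_simp
      ring
    rw [intervalIntegral.integral_eq_sub_of_hasDerivAt hd
      (Continuous.intervalIntegrable (by fun_prop) _ _)]
    simp
  have hmono : ∫ s in (0:ℝ)..t₀, exp (-m * (t₀ - s)) * (ε - K * (t₀ - s)) ≤
      ∫ s in (0:ℝ)..t₀, exp (-m * (t₀ - s)) * r s := by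
    apply intervalIntegral.integral_mono_on ht.le
      (Continuous.intervalIntegrable (by fun_prop) _ _)
    · apply ContinuousOn.intervalIntegrable
      rw [uIcc_of_le ht.le]
      exact ContinuousOn.mul (by fun_prop) hr
    · intro s hs
      exact mul_le_mul_of_nonneg_left (hK s hs) (exp_pos _).le
  refine le_trans ?_ hmono
  rw [hint]
  have hA : ε / 2 / m ≤ (ε - K / m) / m := by gcongr; linarith
  have hA0 : 0 ≤ ε / 2 / m := by positivity
  have hee : exp (-m * t₀) ≤ exp (-t₀) := by
    apply exp_le_exp.2
    nlinarith
  have h3 : 0 ≤ exp (-m * t₀) * (K / m * t₀) := by positivity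
  have h4 : ε / 2 / m * (1 - exp (-t₀)) ≤ (ε - K / m) / m * (1 - exp (-m * t₀)) :=
    mul_le_mul hA (by linarith) (by linarith) (hA0.trans hA)
  have h5 : ε / 2 * (1 - exp (-t₀)) / m = ε / 2 / m * (1 - exp (-t₀)) := by ring
  rw [h5]
  linarith

/-- **Lemma (§2).** Among the numbers `Λ_n = ∫₀^{t₀} e^{-n²(t₀-s)} r₀(s) ds`, `n ≥ 1`,
at most finitely many vanish; moreover `|Λ_n| ≥ a₀ n⁻²` for all large `n`. -/
theorem lambda_lemma
    (T : ℝ) (hT : 0 < T)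
    (r0 : ℝ → ℝ) (hr0 : ContinuousOn r0 (Icc 0 T))
    (t₀ : ℝ) (ht₀ : t₀ ∈ Ioc 0 T) (hr0t₀ : r0 t₀ ≠ 0)
    (Λ : ℕ → ℝ)
    (hΛ : ∀ n : ℕ, Λ n = ∫ s in (0:ℝ)..t₀, exp (-(n:ℝ) ^ 2 * (t₀ - s)) * r0 s) :
    {n : ℕ | 1 ≤ n ∧ Λ n = 0}.Finite ∧
    ∃ n₀ : ℕ, ∃ a₀ > (0:ℝ), ∀ n : ℕ, n₀ ≤ n → a₀ / (n:ℝ) ^ 2 ≤ |Λ n| := by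
  have hc : ContinuousOn r0 (Icc 0 t₀) := hr0.mono (Icc_subset_Icc_right ht₀.2)
  have key : ∃ M : ℝ, 1 ≤ M ∧ ∃ a > (0:ℝ), ∀ m : ℝ, M ≤ m →
      a / m ≤ |∫ s in (0:ℝ)..t₀, exp (-m * (t₀ - s)) * r0 s| := by
    rcases lt_or_gt_of_ne hr0t₀ with h | h
    · obtain ⟨M, hM, a, ha, H⟩ := aux_pos t₀ ht₀.1 (fun s => - r0 s) hc.neg (by simpa using h)
      refine ⟨M, hM, a, ha, fun m hm => (H m hm).trans ?_⟩
      simp only [mul_neg, intervalIntegral.integral_neg]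
      exact neg_le_abs _
    · obtain ⟨M, hM, a, ha, H⟩ := aux_pos t₀ ht₀.1 r0 hc h
      exact ⟨M, hM, a, ha, fun m hm => (H m hm).trans (le_abs_self _)⟩
  obtain ⟨M, hM, a, ha, H⟩ := key
  obtain ⟨N, hN⟩ := exists_nat_ge M
  have main : ∀ n : ℕ, N ≤ n → a / (n:ℝ) ^ 2 ≤ |Λ n| := by
    intro n hn
    rw [hΛ]
    apply H
    have h1 : (N:ℝ) ≤ n := by exact_mod_cast hn
    nlinarith
  refine ⟨(finite_lt_nat N).subset ?_, N, a, ha, main⟩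
  rintro n ⟨h1, h0⟩
  by_contra hlt
  have h2 := main n (not_lt.1 hlt)
  rw [h0, abs_zero] at h2
  have h3 : (0:ℝ) < n := by exact_mod_cast h1
  have : 0 < a / (n:ℝ) ^ 2 := by positivity
  linarith
end
end

section
/- For every N ≥ 1 and every choice of pairwise distinct points x₀, x₁, …, x_{N−1} ∈ (0,π), the N×N matrix A with entries A_{j,n} = sin(n x_j), n = 1,…,N, j = 0,…,N−1, is nonsingular (det A ≠ 0). -/
open Real Set

noncomputable section

/-- The `N×N` matrix `(sin (n x_j))`, `n = 1,…,N`, `j = 0,…,N−1`, built from pairwise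
distinct points `x_j ∈ (0,π)`, is nonsingular. -/
theorem sin_matrix_nonsingular
    (N : ℕ) (hN : 1 ≤ N) (x : Fin N → ℝ)
    (hx : ∀ j, x j ∈ Ioo 0 π) (hinj : Function.Injective x) :
    (Matrix.of fun j n : Fin N => sin ((((n : ℕ) : ℝ) + 1) * x j)).det ≠ 0 := by
  have hdeg : ∀ i : Fin N, (Polynomial.Chebyshev.U ℝ ((i : ℕ) : ℤ)).natDegree = (i : ℕ) := fun i =>
    Polynomial.natDegree_eq_of_degree_eq_some (Polynomial.Chebyshev.degree_U_natCast ℝ i)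
  have hA : (Matrix.of fun j n : Fin N => sin ((((n : ℕ) : ℝ) + 1) * x j)) =
      Matrix.diagonal (fun j => sin (x j)) * (Matrix.of (fun i j : Fin N =>
        (Polynomial.Chebyshev.U ℝ ((j : ℕ) : ℤ)).eval (cos (x i)))) := by
    ext i j
    rw [Matrix.diagonal_mul]
    have := Polynomial.Chebyshev.U_real_cos (x i) ((j : ℕ) : ℤ)
    simp only [Matrix.of_apply]
    rw [mul_comm (sin (x i)), this]
    simp
  rw [hA, Matrix.eval_matrixOfPolynomials_eq_vandermonde_mul_matrixOfPolynomials
    (fun i => cos (x i)) (fun j : Fin N => Polynomial.Chebyshev.U ℝ ((j : ℕ) : ℤ))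
    (fun i => (hdeg i).le), Matrix.det_mul, Matrix.det_mul, Matrix.det_diagonal]
  refine mul_ne_zero ?_ (mul_ne_zero ?_ ?_)
  · exact Finset.prod_ne_zero_iff.2 fun j _ => (sin_pos_of_mem_Ioo (hx j)).ne'
  · rw [Matrix.det_vandermonde_ne_zero_iff]
    intro i j h
    exact hinj (injOn_cos (Ioo_subset_Icc_self (hx i)) (Ioo_subset_Icc_self (hx j)) h)
  · rw [Matrix.det_of_upperTriangular]
    · refine Finset.prod_ne_zero_iff.2 fun j _ => ?_
      have h1 : (Polynomial.Chebyshev.U ℝ ((j : ℕ) : ℤ)).leadingCoeff ≠ 0 := by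
        rw [Polynomial.Chebyshev.leadingCoeff_U_natCast]
        positivity
      rw [Polynomial.leadingCoeff, hdeg j] at h1
      exact h1
    · intro i j hij
      refine Polynomial.coeff_eq_zero_of_natDegree_lt ?_
      rw [hdeg j]
      exact hij
end
end

section
/- sup over t ∈ [0,T] and over all integers n ≥ 1 of |∫₀^t e^{-n²(t-s)} p(s, ωs) ds| tends to 0 as ω → ∞. In other words, the estimate ∫₀^t e^{-n²(t-s)} p(s,ωs) ds = o(1), ω → ∞, holds uniformly with respect to n ≥ 1 and t ∈ [0,T]. -/
open Real Set

noncomputable section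

lemma aux_parts (g : ℝ → ℝ) (hg : Continuous g) (l d t : ℝ) (hl : 0 ≤ l) (ht : 0 ≤ t)
    (hG : ∀ r ∈ Icc (0:ℝ) t, |∫ s in (0:ℝ)..r, g s| ≤ d) :
    |∫ s in (0:ℝ)..t, exp (-l * (t - s)) * g s| ≤ 2 * d := by
  have hu : ∀ x : ℝ, HasDerivAt (fun s => exp (-l * (t - s))) (l * exp (-l * (t - x))) x := by
    intro x
    have h1 : HasDerivAt (fun s : ℝ => -l * (t - s)) l x := by
      have := ((hasDerivAt_id x).const_sub t).const_mul (-l)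
      simpa using this
    have := h1.exp
    rwa [mul_comm] at this
  have hv : ∀ x : ℝ, HasDerivAt (fun r => ∫ s in (0:ℝ)..r, g s) (g x) x := fun x =>
    intervalIntegral.integral_hasDerivAt_right (hg.intervalIntegrable _ _)
      hg.aestronglyMeasurable.stronglyMeasurableAtFilter hg.continuousAt
  have hcu : Continuous (fun x : ℝ => l * exp (-l * (t - x))) := by fun_prop
  have h0 := intervalIntegral.integral_mul_deriv_eq_deriv_mul (a := 0) (b := t)
    (fun x _ => hu x) (fun x _ => hv x) (hcu.intervalIntegrable _ _) (hg.intervalIntegrable _ _)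
  rw [h0]
  have hd : 0 ≤ d := (abs_nonneg _).trans (hG 0 ⟨le_rfl, ht⟩)
  have h1 : ‖∫ x in (0:ℝ)..t, l * exp (-l * (t - x)) * ∫ s in (0:ℝ)..x, g s‖
      ≤ ∫ x in (0:ℝ)..t, l * exp (-l * (t - x)) * d := by
    apply intervalIntegral.norm_integral_le_of_norm_le ht
    · refine Filter.Eventually.of_forall fun x hx => ?_
      rw [Real.norm_eq_abs, abs_mul, abs_of_nonneg (by positivity)]
      exact mul_le_mul_of_nonneg_left (hG x ⟨hx.1.le, hx.2⟩) (by positivity)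
    · exact (hcu.mul continuous_const).intervalIntegrable _ _
  have h2 : ∫ x in (0:ℝ)..t, l * exp (-l * (t - x)) * d = (1 - exp (-l * t)) * d := by
    rw [intervalIntegral.integral_mul_const, intervalIntegral.integral_eq_sub_of_hasDerivAt
      (fun x _ => hu x) (hcu.intervalIntegrable _ _)]
    simp
  rw [h2, Real.norm_eq_abs] at h1
  have h3 := hG t ⟨ht, le_rfl⟩
  have h4 : 0 ≤ exp (-l * t) * d := by positivity
  simp only [sub_self, mul_zero, Real.exp_zero, one_mul, intervalIntegral.integral_same, sub_zero]
  rw [abs_le] at *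
  constructor <;> linarith [h1.1, h1.2, h3.1, h3.2]

lemma aux_per (f : ℝ → ℝ) (hf : ∀ x, 0 ≤ x → f (x + 2 * π) = f x) (k : ℕ) :
    ∀ x, 0 ≤ x → f (x + k * (2 * π)) = f x := by
  induction k with
  | zero => intro x _; simp
  | succ k ih =>
    intro x hx
    have h : x + ((k + 1 : ℕ) : ℝ) * (2 * π) = (x + k * (2 * π)) + 2 * π := by push_cast; ring
    rw [h, hf _ (by positivity), ih x hx]

lemma aux_red (x : ℝ) (hx : 0 ≤ x) : ∃ k : ℕ, ∃ y ∈ Icc (0:ℝ) (2 * π), x = y + k * (2 * π) := by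
  have hp : 0 < 2 * π := by positivity
  refine ⟨⌊x / (2 * π)⌋₊, x - ⌊x / (2 * π)⌋₊ * (2 * π), ⟨?_, ?_⟩, by ring⟩
  · have := Nat.floor_le (div_nonneg hx hp.le)
    rw [le_div_iff₀ hp] at this
    linarith
  · have := Nat.lt_floor_add_one (x / (2 * π))
    rw [div_lt_iff₀ hp] at this
    linarith

lemma aux_zero (f : ℝ → ℝ) (hf : ∀ x, 0 ≤ x → f (x + 2 * π) = f x)
    (h0 : (∫ s in (0:ℝ)..(2 * π), f s) = 0) (w : ℝ) (hw : 0 < w) (k : ℕ) :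
    ∫ s in (k * (2 * π / w))..((k + 1) * (2 * π / w)), f (w * s) = 0 := by
  rw [intervalIntegral.integral_comp_mul_left _ hw.ne']
  have e1 : w * (k * (2 * π / w)) = 0 + k * (2 * π) := by field_simp; ring
  have e2 : w * ((k + 1) * (2 * π / w)) = 2 * π + k * (2 * π) := by field_simp; ring
  rw [e1, e2, ← intervalIntegral.integral_comp_add_right]
  have : ∫ x in (0:ℝ)..(2 * π), f (x + k * (2 * π)) = ∫ x in (0:ℝ)..(2 * π), f x := by
    apply intervalIntegral.integral_congr
    intro x hx
    rw [uIcc_of_le (by positivity)] at hx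
    exact aux_per f hf k x hx.1
  rw [this, h0]; simp

lemma aux_main (T : ℝ) (hT : 0 < T) (q : ℝ → ℝ → ℝ)
    (hc : Continuous (fun z : ℝ × ℝ => q z.1 z.2))
    (hper : ∀ t x, 0 ≤ x → q t (x + 2 * π) = q t x)
    (hzero : ∀ t, (∫ s in (0:ℝ)..(2 * π), q t s) = 0) (d : ℝ) (hd : 0 < d) :
    ∃ w₀ : ℝ, 0 < w₀ ∧ ∀ w ≥ w₀, ∀ t ∈ Icc (0:ℝ) T, |∫ s in (0:ℝ)..t, q s (w * s)| ≤ d := by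
  have hK : IsCompact (Icc (0:ℝ) T ×ˢ Icc (0:ℝ) (2 * π)) := isCompact_Icc.prod isCompact_Icc
  obtain ⟨M, hM⟩ := hK.exists_bound_of_continuousOn hc.continuousOn
  have hM' : ∀ s ∈ Icc (0:ℝ) T, ∀ x, 0 ≤ x → |q s x| ≤ M := by
    intro s hs x hx
    obtain ⟨k, y, hy, rfl⟩ := aux_red x hx
    rw [aux_per (q s) (hper s) k y hy.1]
    exact hM (s, y) ⟨hs, hy⟩
  have hM0 : 0 ≤ M := (abs_nonneg _).trans (hM' 0 ⟨le_rfl, hT.le⟩ 0 le_rfl)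
  have hU := hK.uniformContinuousOn_of_continuous hc.continuousOn
  rw [Metric.uniformContinuousOn_iff] at hU
  obtain ⟨η, hη, hU⟩ := hU (d / (2 * T)) (by positivity)
  have hU' : ∀ s ∈ Icc (0:ℝ) T, ∀ s' ∈ Icc (0:ℝ) T, |s - s'| < η → ∀ x, 0 ≤ x →
      |q s x - q s' x| ≤ d / (2 * T) := by
    intro s hs s' hs' hss x hx
    obtain ⟨k, y, hy, rfl⟩ := aux_red x hx
    rw [aux_per (q s) (hper s) k y hy.1, aux_per (q s') (hper s') k y hy.1]
    have := hU (s, y) ⟨hs, hy⟩ (s', y) ⟨hs', hy⟩ (by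
      rw [Prod.dist_eq, dist_self, Real.dist_eq]; exact max_lt hss hη)
    exact this.le
  have hp : 0 < 2 * π := by positivity
  refine ⟨max (2 * (2 * π) / η) ((M + 1) * (2 * π) * 2 / d), lt_max_of_lt_left (by positivity), ?_⟩
  intro w hw t ht
  have hw1 := (le_max_left _ _).trans hw
  have hw2 := (le_max_right _ _).trans hw
  have hw0 : 0 < w := lt_of_lt_of_le (by positivity) hw1
  rw [div_le_iff₀ hη] at hw1
  rw [div_le_iff₀ hd] at hw2
  have hg : Continuous (fun s => q s (w * s)) :=
    hc.comp (continuous_id.prodMk (continuous_const.mul continuous_id))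
  obtain ⟨h, hh⟩ : ∃ h, h = 2 * π / w := ⟨_, rfl⟩
  have hh0 : 0 < h := by rw [hh]; positivity
  have hhη : h < η := by rw [hh, div_lt_iff₀ hw0]; nlinarith
  have hhM : M * h ≤ d / 2 := by
    rw [hh, ← mul_div_assoc, div_le_iff₀ hw0]; nlinarith
  have key : ∀ k : ℕ, k * h ≤ T → |∫ s in (0:ℝ)..(k * h), q s (w * s)| ≤ d / (2 * T) * (k * h) := by
    intro k
    induction k with
    | zero => intro _; simp
    | succ k ih =>
      intro hk
      push_cast at hk ⊢
      have hkh : 0 ≤ k * h := by positivity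
      have hkT : k * h ≤ T := by nlinarith
      have ih := ih hkT
      rw [← intervalIntegral.integral_add_adjacent_intervals (hg.intervalIntegrable 0 (k * h))
        (hg.intervalIntegrable (k * h) ((k + 1) * h))]
      have hcc : Continuous (fun s => q (k * h) (w * s)) :=
        hc.comp (continuous_const.prodMk (continuous_const.mul continuous_id))
      have hz := aux_zero (q (k * h)) (hper _) (hzero _) w hw0 k
      rw [← hh] at hz
      have e : ∫ s in (k * h)..((k + 1) * h), q s (w * s) =
          ∫ s in (k * h)..((k + 1) * h), (q s (w * s) - q (k * h) (w * s)) := by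
        rw [intervalIntegral.integral_sub (hg.intervalIntegrable _ _) (hcc.intervalIntegrable _ _),
          hz, sub_zero]
      have b : ‖∫ s in (k * h)..((k + 1) * h), (q s (w * s) - q (k * h) (w * s))‖ ≤
          d / (2 * T) * |(k + 1) * h - k * h| := by
        apply intervalIntegral.norm_integral_le_of_norm_le_const
        intro s hs
        rw [uIoc_of_le (by nlinarith)] at hs
        have hs0 : 0 ≤ s := hkh.trans hs.1.le
        refine hU' s ⟨hs0, hs.2.trans hk⟩ _ ⟨hkh, hkT⟩ ?_ _ (by positivity)
        rw [abs_of_nonneg (by linarith [hs.1])]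
        linarith [hs.2]
      have e3 : (k + 1) * h - k * h = h := by ring
      rw [← e, e3, abs_of_pos hh0, Real.norm_eq_abs] at b
      refine (abs_add_le _ _).trans ((add_le_add ih b).trans (le_of_eq (by ring)))
  obtain ⟨k, hk⟩ : ∃ k, k = ⌊t / h⌋₊ := ⟨_, rfl⟩
  have k1 : k * h ≤ t := by
    have := Nat.floor_le (div_nonneg ht.1 hh0.le)
    rwa [← hk, le_div_iff₀ hh0] at this
  have k2 : t < (k + 1) * h := by
    have := Nat.lt_floor_add_one (t / h)
    rwa [← hk, div_lt_iff₀ hh0] at this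
  have hkh : 0 ≤ k * h := by positivity
  have b1 := key k (k1.trans ht.2)
  have b2 : ‖∫ s in (k * h)..t, q s (w * s)‖ ≤ M * |t - k * h| := by
    apply intervalIntegral.norm_integral_le_of_norm_le_const
    intro s hs
    rw [uIoc_of_le k1] at hs
    have hs0 : 0 ≤ s := hkh.trans hs.1.le
    exact hM' s ⟨hs0, hs.2.trans ht.2⟩ _ (by positivity)
  rw [abs_of_nonneg (by linarith), Real.norm_eq_abs] at b2
  have b3 : M * (t - k * h) ≤ M * h := mul_le_mul_of_nonneg_left (by linarith) hM0
  have b4 : d / (2 * T) * (k * h) ≤ d / 2 := by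
    have : d / (2 * T) * (k * h) ≤ d / (2 * T) * T :=
      mul_le_mul_of_nonneg_left (k1.trans ht.2) (by positivity)
    have e : d / (2 * T) * T = d / 2 := by field_simp
    linarith
  rw [← intervalIntegral.integral_add_adjacent_intervals (hg.intervalIntegrable 0 (k * h))
        (hg.intervalIntegrable (k * h) t)]
  refine (abs_add_le _ _).trans ?_
  linarith

/-- The key estimate: for `p(t,τ)` continuous, 2π-periodic in `τ` with zero mean,
`∫₀^t e^{-n²(t-s)} p(s,ωs) ds = o(1)` as `ω → ∞`, uniformly in `n ≥ 1` and `t ∈ [0,T]`. -/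
theorem oscillating_integral_uniform_o1
    (T : ℝ) (hT : 0 < T) (p : ℝ → ℝ → ℝ)
    (hc : ContinuousOn (fun q : ℝ × ℝ => p q.1 q.2) (Icc 0 T ×ˢ Ici 0))
    (hper : ∀ t ∈ Icc (0:ℝ) T, ∀ τ ∈ Ici (0:ℝ), p t (τ + 2 * π) = p t τ)
    (hzero : ∀ t ∈ Icc (0:ℝ) T, (∫ s in (0:ℝ)..(2 * π), p t s) = 0) :
    ∀ ε > 0, ∃ ω₀ : ℝ, ∀ ω ≥ ω₀, ∀ n : ℕ, 1 ≤ n → ∀ t ∈ Icc (0:ℝ) T,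
      |∫ s in (0:ℝ)..t, exp (-(n:ℝ) ^ 2 * (t - s)) * p s (ω * s)| ≤ ε := by
  intro ε hε
  have hcl : ∀ s : ℝ, max 0 (min s T) ∈ Icc (0:ℝ) T := fun s =>
    ⟨le_max_left _ _, max_le hT.le (min_le_right _ _)⟩
  have hcl' : ∀ s ∈ Icc (0:ℝ) T, max 0 (min s T) = s := fun s hs => by
    rw [min_eq_left hs.2, max_eq_right hs.1]
  have hqc : Continuous (fun z : ℝ × ℝ => p (max 0 (min z.1 T)) (max 0 z.2)) := by
    have : Continuous (fun z : ℝ × ℝ => ((max 0 (min z.1 T), max 0 z.2) : ℝ × ℝ)) := by fun_prop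
    exact hc.comp_continuous this (fun z => ⟨hcl _, mem_Ici.mpr (le_max_left _ _)⟩)
  obtain ⟨w₀, hw0, H⟩ := aux_main T hT (fun s x => p (max 0 (min s T)) (max 0 x)) hqc
    (by
      intro t x hx
      have : 0 ≤ x + 2 * π := by positivity
      simp only [max_eq_right hx, max_eq_right this]
      exact hper _ (hcl t) x hx)
    (by
      intro t
      refine Eq.trans ?_ (hzero _ (hcl t))
      apply intervalIntegral.integral_congr
      intro x hx
      rw [uIcc_of_le (by positivity)] at hx
      simp only [max_eq_right hx.1]) (ε / 2) (by positivity)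
  refine ⟨w₀, fun w hw n _ t ht => ?_⟩
  have hwp : 0 < w := hw0.trans_le hw
  have e : ∫ s in (0:ℝ)..t, exp (-(n:ℝ) ^ 2 * (t - s)) * p s (w * s) =
      ∫ s in (0:ℝ)..t, exp (-((n:ℝ) ^ 2) * (t - s)) * p (max 0 (min s T)) (max 0 (w * s)) := by
    apply intervalIntegral.integral_congr
    intro s hs
    rw [uIcc_of_le ht.1] at hs
    have h1 : 0 ≤ w * s := mul_nonneg hwp.le hs.1
    simp only [max_eq_right h1, hcl' s ⟨hs.1, hs.2.trans ht.2⟩]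
  rw [e]
  have hg : Continuous (fun s => p (max 0 (min s T)) (max 0 (w * s))) :=
    hqc.comp (continuous_id.prodMk (continuous_const.mul continuous_id))
  have := aux_parts _ hg ((n:ℝ) ^ 2) (ε / 2) t (by positivity) ht.1
    (fun r hr => H w hw r ⟨hr.1, hr.2.trans ht.2⟩)
  linarith
end
end
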